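/- For every k ∈ ℕ, the critical function q_c of anisotropic bond percolation on the slab S^k satisfies q_c(p_k) = 1 and lim_{p ↓ p_k} q_c(p) = 1. -/

import Mathlib

open MeasureTheory Set
open scoped ENNReal

namespace AnisoSlab

/-! ### A concrete construction of countable products of Bernoulli measures

The product Bernoulli measure on `ι → Bool` (each coordinate `i` open with
probability `P i`, independently) is realized as the pushforward of Lebesgue
measure on `[0,1)`: the binary digits of a uniform sample are i.i.d. fair
coins; regrouping them along a pairing function yields countably many
independent uniform samples, and comparing the `i`-th sample with `P i`
yields the desired independent Bernoulli coordinates. -/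

/-- The `n`-th binary digit of `x` (digits after the binary point). -/
noncomputable def binDigit (n : ℕ) (x : ℝ) : Bool :=
  decide (⌊x * 2 ^ (n + 1)⌋ % 2 = 1)

/-- Countably many independent uniform-`[0,1]` samples extracted from a single
uniform sample `x` on `[0,1)`, by regrouping its binary digits. -/
noncomputable def unifSample (i : ℕ) (x : ℝ) : ℝ :=
  ∑' n : ℕ, if binDigit (Nat.pair i n) x then ((2 : ℝ) ^ (n + 1))⁻¹ else 0

/-- The product Bernoulli measure on `ι → Bool`, coordinate `i` being `true`
with probability `P i`, independently over `i`. -/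
noncomputable def bernoulliProduct {ι : Type*} [Encodable ι] (P : ι → ℝ) :
    Measure (ι → Bool) :=
  Measure.map (fun x i => decide (unifSample (Encodable.encode i) x < P i))
    (volume.restrict (Set.Ico (0 : ℝ) 1))

/-! ### The slab `S^k` and anisotropic bond percolation on it -/

/-- Ambient vertices: `ℤ³`; the slab `S^k` uses those with third coordinate in `{0, …, k}`. -/
abbrev Vtx : Type := ℤ × ℤ × ℤ

/-- The three unit coordinate vectors. -/
def dvec : Fin 3 → Vtx
  | 0 => (1, 0, 0)
  | 1 => (0, 1, 0)
  | 2 => (0, 0, 1)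

/-- A bond is indexed by its lower endpoint `v` and a direction `i`; it joins
`v` to `v + dvec i`. Directions `0, 1` give radial (horizontal) bonds, and
direction `2` gives axial (vertical) bonds. -/
abbrev EdgeIdx : Type := Vtx × Fin 3

/-- A percolation configuration: each bond is open (`true`) or closed (`false`). -/
abbrev Config : Type := EdgeIdx → Bool

/-- `v` is a vertex of the slab `S^k`. -/
def InSlab (k : ℕ) (v : Vtx) : Prop := 0 ≤ v.2.2 ∧ v.2.2 ≤ k

/-- `(v, i)` is a bond of the slab `S^k` (both endpoints lie in the slab). -/
def IsEdge (k : ℕ) (e : EdgeIdx) : Prop := InSlab k e.1 ∧ InSlab k (e.1 + dvec e.2)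

/-- The measure `P_{p,q}` on configurations of `S^k`: each radial (horizontal)
bond is open with probability `p` and each axial (vertical) bond is open with
probability `q`, independently. -/
noncomputable def slabMeasure (k : ℕ) (p q : ℝ) : Measure Config :=
  bernoulliProduct (fun e => if e.2 = 2 then q else p)

/-- `x` and `y` are joined by an open bond of `S^k` in the configuration `ω`. -/
def OpenAdj (k : ℕ) (ω : Config) (x y : Vtx) : Prop :=
  ∃ i : Fin 3,
    (y = x + dvec i ∧ IsEdge k (x, i) ∧ ω (x, i) = true) ∨
    (x = y + dvec i ∧ IsEdge k (y, i) ∧ ω (y, i) = true)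

/-- The open cluster of the vertex `x` in the configuration `ω`. -/
def cluster (k : ℕ) (ω : Config) (x : Vtx) : Set Vtx :=
  {y | Relation.ReflTransGen (OpenAdj k ω) x y}

/-- The percolation function `θ(p,q) = P_{p,q}(0 ↔ ∞)`. -/
noncomputable def theta (k : ℕ) (p q : ℝ) : ℝ≥0∞ :=
  slabMeasure k p q {ω | (cluster k ω 0).Infinite}

/-- `p_k = 1 - (1/2)^{1/(k+1)}`, the horizontal critical value at `q = 1`. -/
noncomputable def pCrit (k : ℕ) : ℝ := 1 - (1 / 2 : ℝ) ^ ((1 : ℝ) / (k + 1))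

/-- The critical curve `q_c(p) = sup {q ∈ [0,1] : θ(p,q) = 0}`. -/
noncomputable def qc (k : ℕ) (p : ℝ) : ℝ :=
  sSup {q : ℝ | q ∈ Set.Icc (0 : ℝ) 1 ∧ theta k p q = 0}

/-- The critical curve `p_c(q) = sup {p ∈ [0,1] : θ(p,q) = 0}`. -/
noncomputable def pc (k : ℕ) (q : ℝ) : ℝ :=
  sSup {p : ℝ | p ∈ Set.Icc (0 : ℝ) 1 ∧ theta k p q = 0}




/-! ### Discrete planar topology -/

/-- Nearest-neighbour adjacency in `ℤ²`. -/
def Adj4 (a b : ℤ × ℤ) : Prop :=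
  (b.1 = a.1 ∧ (b.2 = a.2 + 1 ∨ a.2 = b.2 + 1)) ∨ (b.2 = a.2 ∧ (b.1 = a.1 + 1 ∨ a.1 = b.1 + 1))

theorem Adj4.symm {a b : ℤ × ℤ} (h : Adj4 a b) : Adj4 b a := by
  unfold Adj4 at *; omega

/-- `a` and `b` are connected inside `S`. -/
def Conn (S : Set (ℤ × ℤ)) (a b : ℤ × ℤ) : Prop :=
  a ∈ S ∧ Relation.ReflTransGen (fun x y => Adj4 x y ∧ y ∈ S) a b

theorem Conn.refl {S : Set (ℤ × ℤ)} {a : ℤ × ℤ} (h : a ∈ S) : Conn S a a := ⟨h, .refl⟩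

theorem Conn.left {S : Set (ℤ × ℤ)} {a b : ℤ × ℤ} (h : Conn S a b) : a ∈ S := h.1

theorem Conn.right {S : Set (ℤ × ℤ)} {a b : ℤ × ℤ} (h : Conn S a b) : b ∈ S := by
  rcases h with ⟨ha, h⟩
  cases h with
  | refl => exact ha
  | tail _ h => exact h.2

theorem Conn.trans {S : Set (ℤ × ℤ)} {a b c : ℤ × ℤ} (h : Conn S a b) (h' : Conn S b c) :
    Conn S a c := ⟨h.1, h.2.trans h'.2⟩

theorem Conn.step {S : Set (ℤ × ℤ)} {a b c : ℤ × ℤ} (h : Conn S a b) (h' : Adj4 b c)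
    (hc : c ∈ S) : Conn S a c := ⟨h.1, h.2.tail ⟨h', hc⟩⟩

theorem Conn.of_adj {S : Set (ℤ × ℤ)} {a b : ℤ × ℤ} (ha : a ∈ S) (h' : Adj4 a b)
    (hb : b ∈ S) : Conn S a b := (Conn.refl ha).step h' hb

theorem Conn.ind {S : Set (ℤ × ℤ)} {a : ℤ × ℤ} {P : ℤ × ℤ → Prop} (h0 : P a)
    (hs : ∀ b c, Conn S a b → P b → Adj4 b c → c ∈ S → P c) {b : ℤ × ℤ} (h : Conn S a b) : P b := by
  obtain ⟨ha, h⟩ := h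
  induction h with
  | refl => exact h0
  | tail h1 h2 ih => exact hs _ _ ⟨ha, h1⟩ ih h2.1 h2.2

theorem Conn.symm {S : Set (ℤ × ℤ)} {a b : ℤ × ℤ} (h : Conn S a b) : Conn S b a := by
  have ha := h.left
  refine Conn.ind (P := fun b => Conn S b a) (Conn.refl ha) ?_ h
  intro b c hb h1 h2 h3
  exact (Conn.of_adj h3 h2.symm hb.right).trans h1

theorem Conn.mono {S S' : Set (ℤ × ℤ)} (hS : S ⊆ S') {a b : ℤ × ℤ} (h : Conn S a b) :
    Conn S' a b := by
  refine Conn.ind (P := fun b => Conn S' a b) (Conn.refl (hS h.left)) ?_ h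
  intro b c _ h1 h2 h3
  exact h1.step h2 (hS h3)

/-- Mapping a connection. -/
theorem Conn.map {S S' : Set (ℤ × ℤ)} (f : ℤ × ℤ → ℤ × ℤ) (hf : ∀ a ∈ S, f a ∈ S')
    (hadj : ∀ a b, a ∈ S → b ∈ S → Adj4 a b → Adj4 (f a) (f b) ∨ f a = f b)
    {a b : ℤ × ℤ} (h : Conn S a b) : Conn S' (f a) (f b) := by
  refine Conn.ind (P := fun b => Conn S' (f a) (f b)) (Conn.refl (hf _ h.left)) ?_ h
  intro b c hb h1 h2 h3
  rcases hadj b c hb.right h3 h2 with h | h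
  · exact h1.step h (hf _ h3)
  · rw [← h]; exact h1

theorem Conn.comp {S : Set (ℤ × ℤ)} {a b : ℤ × ℤ} (h : Conn S a b) :
    Conn {c | Conn S a c} a b := by
  have ha := h.left
  refine Conn.ind (P := fun b => Conn {c | Conn S a c} a b) (Conn.refl (Conn.refl ha)) ?_ h
  intro b c hb h1 h2 h3
  exact h1.step h2 (hb.step h2 h3)

/-- First exit from `T`. -/
theorem Conn.exit {S T : Set (ℤ × ℤ)} {a b : ℤ × ℤ} (h : Conn S a b) (ha : a ∈ T) (hb : b ∉ T) :
    ∃ w w', Conn (S ∩ T) a w ∧ Adj4 w w' ∧ w' ∈ S ∧ w' ∉ T := by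
  have key : Conn (S ∩ T) a b ∨ ∃ w w', Conn (S ∩ T) a w ∧ Adj4 w w' ∧ w' ∈ S ∧ w' ∉ T := by
    refine Conn.ind (P := fun b => Conn (S ∩ T) a b ∨
      ∃ w w', Conn (S ∩ T) a w ∧ Adj4 w w' ∧ w' ∈ S ∧ w' ∉ T) (Or.inl (Conn.refl ⟨h.left, ha⟩)) ?_ h
    intro b c hb h1 h2 h3
    rcases h1 with h1 | h1
    · by_cases hc : c ∈ T
      · exact Or.inl (h1.step h2 ⟨h3, hc⟩)
      · exact Or.inr ⟨b, c, h1, h2, h3, hc⟩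
    · exact Or.inr h1
  rcases key with h1 | h1
  · exact absurd h1.right.2 hb
  · exact h1

theorem Conn.seq {S : Set (ℤ × ℤ)} {a b : ℤ × ℤ} (h : Conn S a b) :
    ∃ (n : ℕ) (γ : ℕ → ℤ × ℤ), γ 0 = a ∧ γ n = b ∧ (∀ i, γ i ∈ S) ∧
      ∀ i, i < n → Adj4 (γ i) (γ (i + 1)) := by
  refine Conn.ind (P := fun b => ∃ (n : ℕ) (γ : ℕ → ℤ × ℤ), γ 0 = a ∧ γ n = b ∧ (∀ i, γ i ∈ S) ∧
      ∀ i, i < n → Adj4 (γ i) (γ (i + 1))) ?_ ?_ h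
  · exact ⟨0, fun _ => a, rfl, rfl, fun _ => h.left, by simp⟩
  · rintro b c hb ⟨n, γ, h0, hn, hS, hstep⟩ h2 h3
    refine ⟨n + 1, fun i => if i ≤ n then γ i else c, by simp [h0], by simp, ?_, ?_⟩
    · intro i; dsimp only; split_ifs
      · exact hS i
      · exact h3
    · intro i hi
      dsimp only
      rcases Nat.lt_or_ge i n with h | h
      · rw [if_pos (by omega), if_pos (by omega)]; exact hstep i h
      · have : i = n := by omega
        subst this
        rw [if_pos le_rfl, if_neg (by omega), hn]; exact h2

/-- Stokes formula mod 2 on a grid. -/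
theorem stokes (h v : ℕ → ℕ → ZMod 2) (m n : ℕ)
    (H : ∀ i j, i < m → j < n → h i j + v (i + 1) j + h i (j + 1) + v i j = 0) :
    ∑ i ∈ Finset.range m, h i 0 + ∑ j ∈ Finset.range n, v m j
      + ∑ i ∈ Finset.range m, h i n + ∑ j ∈ Finset.range n, v 0 j = 0 := by
  have two : ∀ a : ZMod 2, a + a = 0 := by decide
  have row : ∀ j, j < n → ∀ m', m' ≤ m → ∑ i ∈ Finset.range m', h i j
      + ∑ i ∈ Finset.range m', h i (j + 1) = v m' j + v 0 j := by
    intro j hj m' hm'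
    induction m' with
    | zero => simp [two]
    | succ m' ih =>
      have e1 := ih (by omega)
      have e2 := H m' j (by omega) hj
      rw [Finset.sum_range_succ, Finset.sum_range_succ]
      linear_combination e1 + e2 - two (v (m' + 1) j)
  have main : ∀ n', n' ≤ n → ∑ i ∈ Finset.range m, h i 0 + ∑ j ∈ Finset.range n', v m j
      + ∑ i ∈ Finset.range m, h i n' + ∑ j ∈ Finset.range n', v 0 j = 0 := by
    intro n' hn'
    induction n' with
    | zero => simp [two]
    | succ n' ih =>
      have e1 := ih (by omega)
      have e2 := row n' (by omega) m le_rfl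
      rw [Finset.sum_range_succ, Finset.sum_range_succ]
      linear_combination e1 + e2 + two (v m n') + two (v 0 n') - two (∑ i ∈ Finset.range m, h i n')
  exact main n le_rfl

theorem telescope2 (g h : ℕ → ZMod 2) (m : ℕ) (H : ∀ i, i < m → h i = g i + g (i + 1)) :
    ∑ i ∈ Finset.range m, h i = g 0 + g m := by
  have two : ∀ a : ZMod 2, a + a = 0 := by decide
  induction m with
  | zero => simp [two]
  | succ m ih =>
    rw [Finset.sum_range_succ, ih (fun i hi => H i (by omega)), H m (by omega)]
    linear_combination two (g m)

/-- the crossing cochain of the ray `{x = 1/2, y > 0}` -/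
noncomputable def rayC (d e : ℤ × ℤ) : ZMod 2 :=
  if 0 < d.2 ∧ e.2 = d.2 ∧ ((d.1 = 0 ∧ e.1 = 1) ∨ (d.1 = 1 ∧ e.1 = 0)) then 1 else 0

set_option maxHeartbeats 4000000 in
theorem rayC_square (d u v : ℤ × ℤ) (hu : Adj4 0 u) (hv : Adj4 0 v) (h0 : d ≠ 0) (h1 : d + u ≠ 0)
    (h2 : d + v ≠ 0) (h3 : d + u + v ≠ 0) :
    rayC d (d + u) + rayC (d + u) (d + u + v) + rayC (d + v) (d + u + v) + rayC d (d + v) = 0 := by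
  obtain ⟨x, y⟩ := d
  obtain ⟨u1, u2⟩ := u
  obtain ⟨v1, v2⟩ := v
  have two : (1 : ZMod 2) + 1 = 0 := by decide
  simp only [Adj4, Prod.mk_add_mk, ne_eq, Prod.mk_eq_zero, rayC, Prod.fst_zero, Prod.snd_zero] at *
  rcases hu with ⟨rfl, hu⟩ | ⟨rfl, hu⟩ <;> rcases hv with ⟨rfl, hv⟩ | ⟨rfl, hv⟩ <;>
  rcases hu with hu | hu <;> rcases hv with hv | hv <;>
  split_ifs <;> first | (simp [two]; done) | (exfalso; omega)

/-- Two crossing paths intersect. -/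
theorem cross_inter' {A B : Set (ℤ × ℤ)} {l r t b : ℤ × ℤ} {x0 x1 y0 y1 : ℤ}
    (hA : ∀ c ∈ A, y0 ≤ c.2 ∧ c.2 ≤ y1) (hB : ∀ c ∈ B, x0 ≤ c.1 ∧ c.1 ≤ x1)
    (h1 : Conn A l r) (hl : l.1 = x0) (hr : r.1 = x1)
    (h2 : Conn B b t) (hb : b.2 = y0) (ht : t.2 = y1) : ∃ c, c ∈ A ∧ c ∈ B := by
  by_contra hno
  push Not at hno
  obtain ⟨m, γ, g0, gm, gS, gstep⟩ := h1.seq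
  obtain ⟨n, η, e0, en, eS, estep⟩ := h2.seq
  have hne : ∀ i j, γ i - η j ≠ 0 := by
    intro i j h
    exact hno _ (gS i) (by rw [sub_eq_zero.1 h]; exact eS j)
  have hne' : ∀ i j, ¬ ((γ i).1 = (η j).1 ∧ (γ i).2 = (η j).2) := by
    intro i j h
    exact hne i j (by ext <;> simp [h])
  have st := stokes (fun i j => rayC (γ i - η j) (γ (i+1) - η j))
    (fun i j => rayC (γ i - η j) (γ i - η (j+1))) m n (by
      intro i j hi hj
      have := rayC_square (γ i - η j) (γ (i+1) - γ i) (η j - η (j+1))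
        (by have := gstep i hi; simp only [Adj4, Prod.fst_sub, Prod.snd_sub, Prod.fst_zero, Prod.snd_zero] at *; omega)
        (by have := estep j hj; simp only [Adj4, Prod.fst_sub, Prod.snd_sub, Prod.fst_zero, Prod.snd_zero] at *; omega)
        (hne _ _)
        (by have := hne (i+1) j; rwa [show γ i - η j + (γ (i + 1) - γ i) = γ (i+1) - η j by abel])
        (by have := hne i (j+1); rwa [show γ i - η j + (η j - η (j+1)) = γ i - η (j+1) by abel])
        (by have := hne (i+1) (j+1); rwa [show γ i - η j + (γ (i + 1) - γ i) + (η j - η (j+1)) = γ (i+1) - η (j+1) by abel])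
      rwa [show γ i - η j + (γ (i + 1) - γ i) + (η j - η (j+1)) = γ (i+1) - η (j+1) by abel,
        show γ i - η j + (γ (i + 1) - γ i) = γ (i+1) - η j by abel,
        show γ i - η j + (η j - η (j+1)) = γ i - η (j+1) by abel] at this)
  have s3 : ∑ i ∈ Finset.range m, rayC (γ i - η n) (γ (i+1) - η n) = 0 := by
    apply Finset.sum_eq_zero
    intro i _
    have := hA _ (gS i)
    rw [rayC, if_neg]
    simp only [Prod.fst_sub, Prod.snd_sub, en]
    omega
  have s4 : ∑ j ∈ Finset.range n, rayC (γ 0 - η j) (γ 0 - η (j+1)) = 0 := by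
    apply Finset.sum_eq_zero
    intro j _
    have := hB _ (eS j)
    have := hB _ (eS (j+1))
    rw [rayC, if_neg]
    simp only [Prod.fst_sub, Prod.snd_sub, g0]
    omega
  classical
  have s1 := telescope2 (fun i => if (γ i - η 0).1 > 0 then 1 else 0)
    (fun i => rayC (γ i - η 0) (γ (i+1) - η 0)) m (by
      intro i hi
      have a1 := hA _ (gS i)
      have a2 := hA _ (gS (i+1))
      have a3 := hne' i 0
      have a4 := hne' (i+1) 0
      have a5 := gstep i hi
      simp only [Adj4] at a5
      have two : (1 : ZMod 2) + 1 = 0 := by decide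
      simp only [rayC, Prod.fst_sub, Prod.snd_sub, e0] at *
      split_ifs <;> first | (simp [two]; done) | (exfalso; omega))
  have s2 := telescope2 (fun j => if (γ m - η j).1 = 0 ∧ (γ m - η j).2 > 0 then 1 else 0)
    (fun j => rayC (γ m - η j) (γ m - η (j+1))) n (by
      intro j hj
      have a1 := hB _ (eS j)
      have a2 := hB _ (eS (j+1))
      have a3 := hne' m j
      have a4 := hne' m (j+1)
      have a5 := estep j hj
      simp only [Adj4] at a5
      have two : (1 : ZMod 2) + 1 = 0 := by decide
      simp only [rayC, Prod.fst_sub, Prod.snd_sub, gm] at *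
      split_ifs <;> first | (simp [two]; done) | (exfalso; omega))
  rw [s1, s2, s3, s4] at st
  have b1 := hB _ h2.left
  have b2 := hA _ h1.right
  have b3 := hA _ h1.left
  have b4 := hB _ h2.right
  have b5 := hne' m 0
  have b6 := hne' m n
  have two : (1 : ZMod 2) + 1 = 0 := by decide
  simp only [Prod.fst_sub, Prod.snd_sub, g0, gm, e0, en] at *
  split_ifs at st <;> first | (simp at st; done) | omega

theorem cross_inter {A B : Set (ℤ × ℤ)} {l r t b : ℤ × ℤ} {x0 x1 y0 y1 : ℤ}
    (hA : ∀ c ∈ A, y0 ≤ c.2 ∧ c.2 ≤ y1) (hB : ∀ c ∈ B, x0 ≤ c.1 ∧ c.1 ≤ x1)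
    (h1 : Conn A l r) (hl : l.1 = x0) (hr : r.1 = x1)
    (h2 : Conn B b t) (hb : b.2 = y0) (ht : t.2 = y1) : ∃ c, Conn A l c ∧ Conn B b c :=
  cross_inter' (fun c hc => hA c (Conn.right hc)) (fun c hc => hB c (Conn.right hc)) h1.comp hl hr
    h2.comp hb ht




/-- A rectangle of cells. -/
def Rect (x0 x1 y0 y1 : ℤ) : Set (ℤ × ℤ) := {c | x0 ≤ c.1 ∧ c.1 ≤ x1 ∧ y0 ≤ c.2 ∧ c.2 ≤ y1}

theorem mem_Rect {x0 x1 y0 y1 : ℤ} {c : ℤ × ℤ} :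
    c ∈ Rect x0 x1 y0 y1 ↔ x0 ≤ c.1 ∧ c.1 ≤ x1 ∧ y0 ≤ c.2 ∧ c.2 ≤ y1 := Iff.rfl

/-- cochain counting `0`-`2` interfaces -/
def lc (s t : Fin 4) : ZMod 2 := if (s = 0 ∧ t = 2) ∨ (s = 2 ∧ t = 0) then 1 else 0

/-- admissible neighbouring labels -/
def lok (s t : Fin 4) : Prop :=
  ¬ (s = 0 ∧ t = 1) ∧ ¬ (s = 1 ∧ t = 0) ∧ ¬ (s = 2 ∧ t = 3) ∧ ¬ (s = 3 ∧ t = 2)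

instance (s t : Fin 4) : Decidable (lok s t) := by unfold lok; infer_instance

theorem lc_square : ∀ s1 s2 s3 s4 : Fin 4, lok s1 s2 → lok s2 s3 → lok s4 s3 → lok s1 s4 →
    ¬ (s1 < 2 ∧ s3 < 2 ∧ ¬ s2 < 2 ∧ ¬ s4 < 2) → ¬ (s2 < 2 ∧ s4 < 2 ∧ ¬ s1 < 2 ∧ ¬ s3 < 2) →
    lc s1 s2 + lc s2 s3 + lc s4 s3 + lc s1 s4 = 0 := by decide

theorem lc_left : ∀ s t : Fin 4, lok s t → s ≠ 1 → t ≠ 1 →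
    lc s t = (if s = 2 then 1 else 0) + (if t = 2 then 1 else 0) := by decide

theorem lc_top : ∀ s t : Fin 4, lok s t → s ≠ 3 → t ≠ 3 →
    lc s t = (if s = 0 then 1 else 0) + (if t = 0 then 1 else 0) := by decide

theorem lc_bot : ∀ s t : Fin 4, s ≠ 2 → t ≠ 2 → lc s t = 0 := by decide

theorem lc_right : ∀ s t : Fin 4, s ≠ 0 → t ≠ 0 → lc s t = 0 := by decide

theorem hex_exists (O : Set (ℤ × ℤ)) (x0 x1 y0 y1 : ℤ) (hx : x0 ≤ x1) (hy : y0 ≤ y1)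
    (hO1 : ∀ x y, ¬ ((x, y) ∈ O ∧ (x + 1, y + 1) ∈ O ∧ (x + 1, y) ∉ O ∧ (x, y + 1) ∉ O))
    (hO2 : ∀ x y, ¬ ((x + 1, y) ∈ O ∧ (x, y + 1) ∈ O ∧ (x, y) ∉ O ∧ (x + 1, y + 1) ∉ O)) :
    (∃ l r, Conn (O ∩ Rect x0 x1 y0 y1) l r ∧ l.1 = x0 ∧ r.1 = x1) ∨
    (∃ b t, Conn (Oᶜ ∩ Rect x0 x1 y0 y1) b t ∧ b.2 = y0 ∧ t.2 = y1) := by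
  classical
  by_contra hcon
  push Not at hcon
  obtain ⟨hc1, hc2⟩ := hcon
  set R := Rect x0 x1 y0 y1 with hR
  let a : ℤ × ℤ → Prop := fun c => ∃ l, Conn (O ∩ R) l c ∧ l.1 = x0
  let b : ℤ × ℤ → Prop := fun c => ∃ l, Conn (Oᶜ ∩ R) l c ∧ l.2 = y1
  have haO : ∀ c, a c → c ∈ O := fun c ⟨l, h, _⟩ => h.right.1
  have hbO : ∀ c, b c → c ∉ O := fun c ⟨l, h, _⟩ => h.right.1
  have ha : ∀ c d, Adj4 c d → c ∈ R → d ∈ R → c ∈ O → d ∈ O → (a c ↔ a d) := by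
    intro c d h1 h2 h3 h4 h5
    exact ⟨fun ⟨l, h, hl⟩ => ⟨l, h.step h1 ⟨h5, h3⟩, hl⟩,
      fun ⟨l, h, hl⟩ => ⟨l, h.step h1.symm ⟨h4, h2⟩, hl⟩⟩
  have hb : ∀ c d, Adj4 c d → c ∈ R → d ∈ R → c ∉ O → d ∉ O → (b c ↔ b d) := by
    intro c d h1 h2 h3 h4 h5
    exact ⟨fun ⟨l, h, hl⟩ => ⟨l, h.step h1 ⟨h5, h3⟩, hl⟩,
      fun ⟨l, h, hl⟩ => ⟨l, h.step h1.symm ⟨h4, h2⟩, hl⟩⟩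
  let lab : ℤ × ℤ → Fin 4 := fun c => if c ∈ O then (if a c then 0 else 1) else (if b c then 2 else 3)
  have lab_lt : ∀ c, lab c < 2 ↔ c ∈ O := by
    intro c; simp only [lab]; split_ifs with h <;> simp [h]
  have hlok : ∀ c d, Adj4 c d → c ∈ R → d ∈ R → lok (lab c) (lab d) := by
    intro c d h1 h2 h3
    have t1 := ha c d h1 h2 h3
    have t2 := hb c d h1 h2 h3
    simp only [lab]
    by_cases p1 : c ∈ O <;> by_cases p2 : d ∈ O <;> simp only [p1, p2, if_true, if_false]
    · simp only [t1 p1 p2]; split_ifs <;> decide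
    · split_ifs <;> decide
    · split_ifs <;> decide
    · simp only [t2 p1 p2]; split_ifs <;> decide
  have haR : ∀ c, c.1 = x1 → lab c ≠ 0 := by
    intro c hc h
    have : a c := by
      by_contra hn; revert h; simp only [lab, hn, if_false]; split_ifs <;> decide
    obtain ⟨l, h, hl⟩ := this
    exact hc1 l c h hl hc
  have hbB : ∀ c, c.2 = y0 → lab c ≠ 2 := by
    intro c hc h
    have : b c := by
      by_contra hn; revert h; simp only [lab, hn, if_false]; split_ifs <;> decide
    obtain ⟨l, h, hl⟩ := this
    exact hc2 c l h.symm hc hl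
  have haL : ∀ c, c ∈ R → c.1 = x0 → lab c ≠ 1 := by
    intro c h1 h2
    by_cases h3 : c ∈ O
    · have : a c := ⟨c, Conn.refl ⟨h3, h1⟩, h2⟩
      simp only [lab, h3, this, if_true]; decide
    · simp only [lab, h3, if_false]; split_ifs <;> decide
  have hbT : ∀ c, c ∈ R → c.2 = y1 → lab c ≠ 3 := by
    intro c h1 h2
    by_cases h3 : c ∈ O
    · simp only [lab, h3, if_true]; split_ifs <;> decide
    · have : b c := ⟨c, Conn.refl ⟨h3, h1⟩, h2⟩
      simp only [lab, h3, this, if_true, if_false]; decide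
  clear_value lab
  obtain ⟨m, rfl⟩ : ∃ m : ℕ, x1 = x0 + m := ⟨(x1 - x0).toNat, by omega⟩
  obtain ⟨n, rfl⟩ : ∃ n : ℕ, y1 = y0 + n := ⟨(y1 - y0).toNat, by omega⟩
  let P : ℕ → ℕ → ℤ × ℤ := fun i j => (x0 + i, y0 + j)
  have hPR : ∀ i j, i ≤ m → j ≤ n → P i j ∈ R := by
    intro i j hi hj
    rw [hR, mem_Rect]; simp only [P]; omega
  have adjx : ∀ i j, Adj4 (P i j) (P (i + 1) j) :=
    fun i j => Or.inr ⟨rfl, Or.inl (by simp only [P]; push_cast; ring)⟩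
  have adjy : ∀ i j, Adj4 (P i j) (P i (j + 1)) :=
    fun i j => Or.inl ⟨rfl, Or.inl (by simp only [P]; push_cast; ring)⟩
  have st := stokes (fun i j => lc (lab (P i j)) (lab (P (i+1) j)))
    (fun i j => lc (lab (P i j)) (lab (P i (j+1)))) m n (by
    intro i j hi hj
    have r1 := hPR i j (by omega) (by omega)
    have r2 := hPR (i+1) j (by omega) (by omega)
    have r3 := hPR (i+1) (j+1) (by omega) (by omega)
    have r4 := hPR i (j+1) (by omega) (by omega)
    refine lc_square _ _ _ _ (hlok _ _ (adjx i j) r1 r2) (hlok _ _ (adjy _ j) r2 r3)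
      (hlok _ _ (adjx _ _) r4 r3) (hlok _ _ (adjy _ _) r1 r4) ?_ ?_
    · have := hO1 (x0 + i) (y0 + j)
      simp only [lab_lt, P]; push_cast; simp only [← add_assoc]; exact this
    · have := hO2 (x0 + i) (y0 + j)
      simp only [lab_lt, P]; push_cast; simp only [← add_assoc]; exact this)
  have s1 : ∑ i ∈ Finset.range m, lc (lab (P i 0)) (lab (P (i+1) 0)) = 0 := by
    apply Finset.sum_eq_zero
    intro i _
    exact lc_bot _ _ (hbB _ (by simp [P])) (hbB _ (by simp [P]))
  have s2 : ∑ j ∈ Finset.range n, lc (lab (P m j)) (lab (P m (j+1))) = 0 := by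
    apply Finset.sum_eq_zero
    intro i _
    exact lc_right _ _ (haR _ (by simp [P])) (haR _ (by simp [P]))
  have s3 := telescope2 (fun i => if lab (P i n) = 0 then 1 else 0)
    (fun i => lc (lab (P i n)) (lab (P (i+1) n))) m (by
    intro i hi
    have r1 := hPR i n (by omega) le_rfl
    have r2 := hPR (i+1) n (by omega) le_rfl
    exact lc_top _ _ (hlok _ _ (adjx i n) r1 r2) (hbT _ r1 (by simp [P])) (hbT _ r2 (by simp [P])))
  have s4 := telescope2 (fun j => if lab (P 0 j) = 2 then 1 else 0)
    (fun j => lc (lab (P 0 j)) (lab (P 0 (j+1)))) n (by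
    intro j hj
    have r1 := hPR 0 j (by omega) (by omega)
    have r2 := hPR 0 (j+1) (by omega) (by omega)
    exact lc_left _ _ (hlok _ _ (adjy 0 j) r1 r2) (haL _ r1 (by simp [P])) (haL _ r2 (by simp [P])))
  rw [s1, s2, s3, s4] at st
  have u1 := haR (P m n) (by simp [P])
  have u2 := hbB (P 0 0) (by simp [P])
  have r := hPR 0 n (by omega) (by omega)
  have u3 := haL _ r (by simp [P])
  have u4 := hbT _ r (by simp [P])
  simp only [u1, u2, if_false, add_zero, zero_add] at st
  revert u3 u4 st
  generalize lab (P 0 n) = z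
  revert z
  decide




/-- Bernoulli measure on `Bool`. -/
noncomputable def bern (p : ℝ) : Measure Bool :=
  ENNReal.ofReal p • Measure.dirac true + ENNReal.ofReal (1 - p) • Measure.dirac false

theorem bern_prob {p : ℝ} (h0 : 0 ≤ p) (h1 : p ≤ 1) : IsProbabilityMeasure (bern p) := by
  constructor
  simp [bern]
  rw [← ENNReal.ofReal_add h0 (by linarith)]
  simp

noncomputable def coin : Measure Bool := bern (1 / 2)

instance : IsProbabilityMeasure coin := bern_prob (by norm_num) (by norm_num)

theorem coin_singleton (b : Bool) : coin {b} = 2⁻¹ := by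
  have h : ENNReal.ofReal (1/2) = 2⁻¹ := by
    rw [one_div, ENNReal.ofReal_inv_of_pos (by norm_num)]; simp
  have h' : ENNReal.ofReal (1 - 1/2) = 2⁻¹ := by rw [← h]; norm_num
  cases b <;> simp [coin, bern, h', ← h, -one_div]

/-- Fair percolation measure on a countable index set. -/
noncomputable def fair (ι : Type) : Measure (ι → Bool) := Measure.infinitePi (fun _ => coin)

instance (ι : Type) : IsProbabilityMeasure (fair ι) := by unfold fair; infer_instance

theorem coin_flip : coin.map (fun b => !b) = coin := by
  refine Measure.ext_of_singleton ?_
  intro b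
  rw [Measure.map_apply (by fun_prop) (measurableSet_singleton b)]
  have : (fun b => !b) ⁻¹' {b} = {!b} := by ext c; cases b <;> cases c <;> simp
  rw [this, coin_singleton, coin_singleton]

/-- invariance under injective relabelling -/
theorem fair_comp {ι κ : Type} {f : κ → ι} (hf : Function.Injective f) :
    MeasurePreserving (fun (ω : ι → Bool) (j : κ) => ω (f j)) (fair ι) (fair κ) := by
  refine ⟨by fun_prop, ?_⟩
  exact Measure.map_infinitePi_infinitePi_of_inj (P := fun _ : ι => coin) hf

theorem fair_flip {ι : Type} :
    MeasurePreserving (fun (ω : ι → Bool) (j : ι) => !(ω j)) (fair ι) (fair ι) := by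
  refine ⟨by fun_prop, ?_⟩
  have := Measure.infinitePi_map_pi (fun _ : ι => coin) (f := fun _ b => !b) (by intro i; fun_prop)
  simp only [coin_flip] at this
  exact this

/-- dependence on finitely many coordinates -/
def DepOn {ι : Type} (S : Finset ι) (A : Set (ι → Bool)) : Prop :=
  ∀ ω ω', (∀ c ∈ S, ω c = ω' c) → ω ∈ A → ω' ∈ A

def Inc {ι : Type} (S : Finset ι) (A : Set (ι → Bool)) : Prop :=
  ∀ ω ω', (∀ c ∈ S, ω c = true → ω' c = true) → ω ∈ A → ω' ∈ A

theorem Inc.depOn {ι : Type} {S : Finset ι} {A : Set (ι → Bool)} (h : Inc S A) : DepOn S A := by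
  intro ω ω' h1 h2
  exact h ω ω' (fun c hc h3 => by rw [← h1 c hc, h3]) h2

theorem Inc.mono {ι : Type} {S T : Finset ι} {A : Set (ι → Bool)} (h : Inc S A) (hST : S ⊆ T) :
    Inc T A := fun ω ω' h1 h2 => h ω ω' (fun c hc => h1 c (hST hc)) h2

theorem DepOn.mono {ι : Type} {S T : Finset ι} {A : Set (ι → Bool)} (h : DepOn S A) (hST : S ⊆ T) :
    DepOn T A := fun ω ω' h1 h2 => h ω ω' (fun c hc => h1 c (hST hc)) h2

theorem DepOn.compl {ι : Type} {S : Finset ι} {A : Set (ι → Bool)} (h : DepOn S A) :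
    DepOn S Aᶜ := fun ω ω' h1 h2 h3 => h2 (h ω' ω (fun c hc => (h1 c hc).symm) h3)

theorem DepOn.inter {ι : Type} {S : Finset ι} {A B : Set (ι → Bool)} (h : DepOn S A)
    (h' : DepOn S B) : DepOn S (A ∩ B) :=
  fun ω ω' h1 h2 => ⟨h ω ω' h1 h2.1, h' ω ω' h1 h2.2⟩

theorem Inc.inter {ι : Type} {S : Finset ι} {A B : Set (ι → Bool)} (h : Inc S A)
    (h' : Inc S B) : Inc S (A ∩ B) :=
  fun ω ω' h1 h2 => ⟨h ω ω' h1 h2.1, h' ω ω' h1 h2.2⟩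

theorem DepOn.eq_preimage {ι : Type} {S : Finset ι} {A : Set (ι → Bool)} (h : DepOn S A) :
    A = (S.restrict : (ι → Bool) → (S → Bool)) ⁻¹' (S.restrict '' A) := by
  ext ω
  refine ⟨fun hω => ⟨ω, hω, rfl⟩, ?_⟩
  rintro ⟨ω', h1, h2⟩
  refine h ω' ω (fun c hc => ?_) h1
  exact congrFun h2 ⟨c, hc⟩

theorem DepOn.meas {ι : Type} {S : Finset ι} {A : Set (ι → Bool)} (h : DepOn S A) :
    MeasurableSet A := by
  rw [h.eq_preimage]
  exact (Finset.measurable_restrict S) (Set.toFinite _).measurableSet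

theorem fair_fin {ι : Type} {S : Finset ι} {A : Set (ι → Bool)} (h : DepOn S A) [DecidableEq ι]
    [DecidablePred (· ∈ (S.restrict '' A : Set (S → Bool)))] :
    (fair ι).real A = ∑ σ : S → Bool, (1/2 : ℝ)^(S.card) *
      (if σ ∈ (S.restrict '' A : Set (S → Bool)) then 1 else 0) := by
  conv_lhs => rw [h.eq_preimage]
  have hm : MeasurableSet (S.restrict '' A : Set (S → Bool)) := (Set.toFinite _).measurableSet
  rw [Measure.real, ← Measure.map_apply (Finset.measurable_restrict S) hm]
  unfold fair
  rw [Measure.infinitePi_map_restrict, ← Measure.real]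
  have : (S.restrict '' A : Set (S → Bool)) = ((Finset.univ.filter (fun σ => σ ∈ (S.restrict '' A : Set (S → Bool))) : Finset (S → Bool)) : Set (S → Bool)) := by
    ext; simp
  conv_lhs => rw [this]
  rw [← sum_measureReal_singleton, Finset.sum_filter]
  refine Finset.sum_congr rfl fun σ _ => ?_
  split_ifs
  · rw [Measure.real, Measure.pi_singleton]
    simp [coin_singleton]
  · simp

theorem harris {ι : Type} {S : Finset ι} {A B : Set (ι → Bool)} (hA : Inc S A) (hB : Inc S B) :
    (fair ι).real A * (fair ι).real B ≤ (fair ι).real (A ∩ B) := by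
  classical
  rw [fair_fin hA.depOn, fair_fin hB.depOn, fair_fin (hA.inter hB).depOn]
  have mono : ∀ {C : Set (ι → Bool)}, Inc S C → Monotone (fun σ : S → Bool =>
      (if σ ∈ (S.restrict '' C : Set (S → Bool)) then (1:ℝ) else 0)) := by
    intro C hC σ τ h
    dsimp only
    split_ifs with h1 h2
    · exact le_rfl
    · exfalso
      apply h2
      obtain ⟨ω, hω, rfl⟩ := h1
      refine ⟨fun i => if hi : i ∈ S then τ ⟨i, hi⟩ else ω i, ?_, ?_⟩
      · refine hC ω _ (fun c hc h3 => ?_) hω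
        rw [dif_pos hc]
        have := h ⟨c, hc⟩
        simp only [Finset.restrict, h3] at this
        exact Bool.eq_true_of_true_le this
      · ext i; simp
    · norm_num
    · exact le_rfl
  have := fkg (α := S → Bool) _ _ (fun _ => (1/2 : ℝ)^(S.card)) (fun _ => by positivity)
    (fun _ => by dsimp only; split_ifs <;> norm_num) (fun _ => by dsimp only; split_ifs <;> norm_num) (mono hA) (mono hB) (fun _ _ => le_rfl)
  refine this.trans (le_of_eq ?_)
  have h1 : ∑ a : S → Bool, (1/2 : ℝ)^(S.card) = 1 := by
    simp
  rw [h1, one_mul]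
  refine Finset.sum_congr rfl fun σ _ => ?_
  congr 1
  have : σ ∈ (S.restrict '' (A ∩ B) : Set (S → Bool)) ↔ σ ∈ (S.restrict '' A : Set (S → Bool)) ∧ σ ∈ (S.restrict '' B : Set (S → Bool)) := by
    constructor
    · rintro ⟨ω, h, rfl⟩; exact ⟨⟨ω, h.1, rfl⟩, ⟨ω, h.2, rfl⟩⟩
    · rintro ⟨⟨ω, h, rfl⟩, h'⟩
      refine ⟨ω, ⟨h, ?_⟩, rfl⟩
      rw [hB.depOn.eq_preimage]; exact h'
  simp only [this]
  split_ifs <;> simp_all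

theorem fair_indep {ι : Type} {S T : Finset ι} {A B : Set (ι → Bool)} (hA : DepOn S A)
    (hB : DepOn T B) (hST : Disjoint S T) :
    (fair ι).real (A ∩ B) = (fair ι).real A * (fair ι).real B := by
  have h := ProbabilityTheory.iIndepFun_infinitePi (P := fun _ : ι => coin) (X := fun _ b => b)
    (fun _ => measurable_id)
  have h2 := h.indepFun_finset S T hST (fun i => measurable_pi_apply i)
  have h3 := h2.measure_inter_preimage_eq_mul (S.restrict '' A) (T.restrict '' B)
    (Set.toFinite _).measurableSet (Set.toFinite _).measurableSet
  have e1 : ((fun (a : ι → Bool) (i : S) => a i) ⁻¹' (S.restrict '' A)) = A := hA.eq_preimage.symm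
  have e2 : ((fun (a : ι → Bool) (i : T) => a i) ⁻¹' (T.restrict '' B)) = B := hB.eq_preimage.symm
  rw [e1, e2] at h3
  unfold fair Measure.real
  rw [h3, ENNReal.toReal_mul]




/-- Open cells on the fine grid. -/
def Op (ω : ℤ × ℤ → Bool) : Set (ℤ × ℤ) :=
  {c | (c.1 % 2 = 0 ∧ c.2 % 2 = 0) ∨ (c.1 % 2 ≠ c.2 % 2 ∧ ω c = true)}

theorem mem_Op {ω : ℤ × ℤ → Bool} {c : ℤ × ℤ} : c ∈ Op ω ↔
  (c.1 % 2 = 0 ∧ c.2 % 2 = 0) ∨ (c.1 % 2 ≠ c.2 % 2 ∧ ω c = true) := Iff.rfl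

/-- connection events -/
def CE (R U V : Set (ℤ × ℤ)) : Set (ℤ × ℤ → Bool) :=
  {ω | ∃ u ∈ U, ∃ v ∈ V, Conn (Op ω ∩ R) u v}

theorem Op_mono {ω ω' : ℤ × ℤ → Bool} {R : Set (ℤ × ℤ)} (h : ∀ c ∈ R, ω c = true → ω' c = true) :
    Op ω ∩ R ⊆ Op ω' ∩ R := by
  rintro c ⟨h1, h2⟩
  refine ⟨?_, h2⟩
  rcases h1 with h1 | h1
  · exact Or.inl h1
  · exact Or.inr ⟨h1.1, h c h2 h1.2⟩

theorem CE_inc {R U V : Set (ℤ × ℤ)} {S : Finset (ℤ × ℤ)} (hS : ∀ c ∈ R, c ∈ S) :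
    Inc S (CE R U V) := by
  rintro ω ω' h ⟨u, hu, v, hv, hc⟩
  exact ⟨u, hu, v, hv, hc.mono (Op_mono fun c hc => h c (hS c hc))⟩

/-- finite rectangle -/
noncomputable def RectF (x0 x1 y0 y1 : ℤ) : Finset (ℤ × ℤ) := Finset.Icc x0 x1 ×ˢ Finset.Icc y0 y1

theorem mem_RectF {x0 x1 y0 y1 : ℤ} {c : ℤ × ℤ} : c ∈ RectF x0 x1 y0 y1 ↔ c ∈ Rect x0 x1 y0 y1 := by
  simp [RectF, Rect, and_assoc]

/-- local increasing events -/
def IncF (A : Set (ℤ × ℤ → Bool)) : Prop := ∃ S, Inc S A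

theorem IncF.inter {A B : Set (ℤ × ℤ → Bool)} (hA : IncF A) (hB : IncF B) : IncF (A ∩ B) := by
  classical
  obtain ⟨S, hS⟩ := hA
  obtain ⟨T, hT⟩ := hB
  exact ⟨S ∪ T, (hS.mono Finset.subset_union_left).inter (hT.mono Finset.subset_union_right)⟩

/-- shorthand for probability -/
noncomputable def Pr (A : Set (ℤ × ℤ → Bool)) : ℝ := (fair (ℤ × ℤ)).real A

theorem Pr_nonneg (A : Set (ℤ × ℤ → Bool)) : 0 ≤ Pr A := measureReal_nonneg

theorem Pr_le_one (A : Set (ℤ × ℤ → Bool)) : Pr A ≤ 1 := measureReal_le_one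

theorem Pr_mono {A B : Set (ℤ × ℤ → Bool)} (h : A ⊆ B) : Pr A ≤ Pr B := measureReal_mono h

theorem Pr_union {A B C : Set (ℤ × ℤ → Bool)} (h : A ⊆ B ∪ C) : Pr A ≤ Pr B + Pr C :=
  (Pr_mono h).trans (measureReal_union_le B C)

theorem IncF.harris {A B : Set (ℤ × ℤ → Bool)} (hA : IncF A) (hB : IncF B) :
    Pr A * Pr B ≤ Pr (A ∩ B) := by
  classical
  obtain ⟨S, hS⟩ := hA
  obtain ⟨T, hT⟩ := hB
  exact AnisoSlab.harris (hS.mono (Finset.subset_union_left (s₂ := T)))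
    (hT.mono Finset.subset_union_right)

theorem IncF.harris_le {A B : Set (ℤ × ℤ → Bool)} (hA : IncF A) (hB : IncF B) {a b : ℝ}
    (ha : a ≤ Pr A) (hb : b ≤ Pr B) (hb0 : 0 ≤ b) : a * b ≤ Pr (A ∩ B) :=
  (mul_le_mul ha hb hb0 (Pr_nonneg A)).trans (hA.harris hB)

theorem CE_incF {x0 x1 y0 y1 : ℤ} {U V : Set (ℤ × ℤ)} : IncF (CE (Rect x0 x1 y0 y1) U V) :=
  ⟨RectF x0 x1 y0 y1, CE_inc fun _ h => mem_RectF.2 h⟩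

theorem Pr_preserving {f : (ℤ × ℤ → Bool) → (ℤ × ℤ → Bool)}
    (hf : MeasurePreserving f (fair (ℤ × ℤ)) (fair (ℤ × ℤ))) {A B : Set (ℤ × ℤ → Bool)}
    (hA : MeasurableSet A) (h : ∀ ω, f ω ∈ A → ω ∈ B) : Pr A ≤ Pr B := by
  have : Pr A = Pr (f ⁻¹' A) := by
    unfold Pr Measure.real
    rw [hf.measure_preimage hA.nullMeasurableSet]
  rw [this]
  exact Pr_mono h

theorem IncF.meas {A : Set (ℤ × ℤ → Bool)} (hA : IncF A) : MeasurableSet A := by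
  obtain ⟨S, hS⟩ := hA
  exact hS.depOn.meas

theorem CE_symm {x0 x1 y0 y1 : ℤ} {U V : Set (ℤ × ℤ)} {R' U' V' : Set (ℤ × ℤ)}
    (σ : ℤ × ℤ → ℤ × ℤ) (hσ : Function.Injective σ)
    (hadj : ∀ a b, Adj4 a b → Adj4 (σ a) (σ b))
    (hp0 : ∀ c, c.1 % 2 = 0 → c.2 % 2 = 0 → (σ c).1 % 2 = 0 ∧ (σ c).2 % 2 = 0)
    (hp1 : ∀ c, c.1 % 2 ≠ c.2 % 2 → (σ c).1 % 2 ≠ (σ c).2 % 2)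
    (hR : ∀ c ∈ Rect x0 x1 y0 y1, σ c ∈ R') (hU : ∀ c ∈ U, σ c ∈ U') (hV : ∀ c ∈ V, σ c ∈ V') :
    Pr (CE (Rect x0 x1 y0 y1) U V) ≤ Pr (CE R' U' V') := by
  refine Pr_preserving (fair_comp hσ) CE_incF.meas ?_
  rintro ω ⟨u, hu, v, hv, h⟩
  refine ⟨σ u, hU u hu, σ v, hV v hv, h.map σ ?_ fun a b _ _ h => Or.inl (hadj a b h)⟩
  rintro c ⟨h1, h2⟩
  refine ⟨?_, hR c h2⟩
  rcases h1 with h1 | h1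
  · exact Or.inl (hp0 c h1.1 h1.2)
  · exact Or.inr ⟨hp1 c h1.1, h1.2⟩

/-- signed even translations -/
theorem CE_aff {x0 x1 y0 y1 : ℤ} {U V : Set (ℤ × ℤ)} {R' U' V' : Set (ℤ × ℤ)}
    (s t a b : ℤ) (hs : s = 1 ∨ s = -1) (ht : t = 1 ∨ t = -1) (ha : a % 2 = 0) (hb : b % 2 = 0)
    (hR : ∀ c ∈ Rect x0 x1 y0 y1, (s * c.1 + a, t * c.2 + b) ∈ R')
    (hU : ∀ c ∈ U, (s * c.1 + a, t * c.2 + b) ∈ U') (hV : ∀ c ∈ V, (s * c.1 + a, t * c.2 + b) ∈ V') :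
    Pr (CE (Rect x0 x1 y0 y1) U V) ≤ Pr (CE R' U' V') := by
  refine CE_symm (fun c => (s * c.1 + a, t * c.2 + b)) ?_ ?_ ?_ ?_ hR hU hV
  · rintro ⟨c1, c2⟩ ⟨d1, d2⟩ h
    simp only [Prod.mk.injEq] at h
    rcases hs with rfl | rfl <;> rcases ht with rfl | rfl <;> ext <;> simp <;> omega
  · intro c d h
    unfold Adj4 at *
    rcases hs with rfl | rfl <;> rcases ht with rfl | rfl <;> simp <;> omega
  · intro c h1 h2
    rcases hs with rfl | rfl <;> rcases ht with rfl | rfl <;> simp <;> omega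
  · intro c h1
    rcases hs with rfl | rfl <;> rcases ht with rfl | rfl <;> simp <;> omega

theorem CE_swap {x0 x1 y0 y1 : ℤ} {U V : Set (ℤ × ℤ)} {R' U' V' : Set (ℤ × ℤ)}
    (hR : ∀ c ∈ Rect x0 x1 y0 y1, (c.2, c.1) ∈ R')
    (hU : ∀ c ∈ U, (c.2, c.1) ∈ U') (hV : ∀ c ∈ V, (c.2, c.1) ∈ V') :
    Pr (CE (Rect x0 x1 y0 y1) U V) ≤ Pr (CE R' U' V') := by
  refine CE_symm (fun c => (c.2, c.1)) ?_ ?_ ?_ ?_ hR hU hV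
  · rintro ⟨c1, c2⟩ ⟨d1, d2⟩ h
    simp only [Prod.mk.injEq] at h
    ext <;> simp <;> omega
  · intro c d h
    unfold Adj4 at *
    simp; omega
  · intro c h1 h2; simp; omega
  · intro c h1; simp; omega

/-- left-right crossing -/
def LR (x0 x1 y0 y1 : ℤ) : Set (ℤ × ℤ → Bool) :=
  CE (Rect x0 x1 y0 y1) {c | c.1 = x0} {c | c.1 = x1}

/-- bottom-top crossing -/
def TB (x0 x1 y0 y1 : ℤ) : Set (ℤ × ℤ → Bool) :=
  CE (Rect x0 x1 y0 y1) {c | c.2 = y0} {c | c.2 = y1}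

/-- left to a segment of the right side -/
def HL (x0 x1 y0 y1 a b : ℤ) : Set (ℤ × ℤ → Bool) :=
  CE (Rect x0 x1 y0 y1) {c | c.1 = x0} {c | c.1 = x1 ∧ a ≤ c.2 ∧ c.2 ≤ b}

/-- right to a segment of the left side -/
def HR (x0 x1 y0 y1 a b : ℤ) : Set (ℤ × ℤ → Bool) :=
  CE (Rect x0 x1 y0 y1) {c | c.1 = x1} {c | c.1 = x0 ∧ a ≤ c.2 ∧ c.2 ≤ b}

theorem LR_incF {x0 x1 y0 y1 : ℤ} : IncF (LR x0 x1 y0 y1) := CE_incF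
theorem TB_incF {x0 x1 y0 y1 : ℤ} : IncF (TB x0 x1 y0 y1) := CE_incF
theorem HL_incF {x0 x1 y0 y1 a b : ℤ} : IncF (HL x0 x1 y0 y1 a b) := CE_incF
theorem HR_incF {x0 x1 y0 y1 a b : ℤ} : IncF (HR x0 x1 y0 y1 a b) := CE_incF

theorem square_odd (n : ℕ) : 1 / 2 ≤ Pr (LR 0 (2 * n + 1) 0 (2 * n + 1)) := by
  set N : ℤ := 2 * n + 1 with hN
  let τ : ℤ × ℤ → ℤ × ℤ := fun c => (N - c.2, N - c.1)
  have hτ : ∀ c, τ (τ c) = c := by intro c; simp [τ]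
  let f : (ℤ × ℤ → Bool) → (ℤ × ℤ → Bool) := fun ω c => ! ω (τ c)
  have hf : MeasurePreserving f (fair (ℤ × ℤ)) (fair (ℤ × ℤ)) :=
    fair_flip.comp (fair_comp (f := τ) (fun a b h => by rw [← hτ a, h, hτ]))
  have key : ∀ ω, ω ∈ LR 0 N 0 N ∪ f ⁻¹' (LR 0 N 0 N) := by
    intro ω
    have hO1 : ∀ x y : ℤ, ¬ ((x, y) ∈ Op ω ∧ (x + 1, y + 1) ∈ Op ω ∧ (x + 1, y) ∉ Op ω ∧
        (x, y + 1) ∉ Op ω) := by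
      intro x y
      simp only [mem_Op]
      by_cases h : x % 2 = 0 <;> by_cases h' : y % 2 = 0 <;> omega
    have hO2 : ∀ x y : ℤ, ¬ ((x + 1, y) ∈ Op ω ∧ (x, y + 1) ∈ Op ω ∧ (x, y) ∉ Op ω ∧
        (x + 1, y + 1) ∉ Op ω) := by
      intro x y
      simp only [mem_Op]
      by_cases h : x % 2 = 0 <;> by_cases h' : y % 2 = 0 <;> omega
    rcases hex_exists (Op ω) 0 N 0 N (by omega) (by omega) hO1 hO2 with h | h
    · obtain ⟨l, r, h, h1, h2⟩ := h
      exact Or.inl ⟨l, h1, r, h2, h⟩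
    · obtain ⟨b, t, h, h1, h2⟩ := h
      right
      refine ⟨τ t, by simp [τ, h2], τ b, by simp [τ, h1], (h.map (S' := Op (f ω) ∩ Rect 0 N 0 N) τ ?_ ?_).symm⟩
      · rintro c ⟨h3, h4⟩
        have e : f ω (τ c) = ! ω c := by simp [f, hτ]
        simp only [mem_compl_iff, mem_Op, mem_inter_iff, mem_Rect] at *
        rw [e]
        rcases hb : ω c <;> simp [hb, τ] at * <;> omega
      · intro c d _ _ h
        left
        unfold Adj4 at *
        simp only [τ]; omega
  have h1 : 1 ≤ Pr (LR 0 N 0 N) + Pr (f ⁻¹' (LR 0 N 0 N)) := by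
    have : Pr univ = 1 := by simp [Pr]
    rw [← this]
    exact Pr_union (fun ω _ => key ω)
  have h2 : Pr (f ⁻¹' (LR 0 N 0 N)) = Pr (LR 0 N 0 N) := by
    unfold Pr Measure.real
    rw [hf.measure_preimage LR_incF.meas.nullMeasurableSet]
  linarith

theorem square_even (n : ℕ) : 1 / 2 ≤ Pr (LR 0 (2 * n) 0 (2 * n)) := by
  refine (square_odd n).trans (Pr_mono ?_)
  rintro ω ⟨u, hu, v, hv, h⟩
  simp only [mem_ofPred_eq] at hu hv
  let f : ℤ × ℤ → ℤ × ℤ := fun c => (min c.1 (2 * n), min c.2 (2 * n))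
  refine ⟨f u, by simp [f]; omega, f v, by simp [f]; omega, h.map f ?_ ?_⟩
  · rintro c ⟨h1, h2⟩
    simp only [mem_Op, mem_inter_iff, mem_Rect] at *
    by_cases h3 : c.1 ≤ 2 * n ∧ c.2 ≤ 2 * n
    · have : f c = c := by simp [f, h3]
      rw [this]; exact ⟨h1, by omega⟩
    · simp only [f]
      omega
  · intro c d _ _ h
    unfold Adj4 at *
    simp only [f, Prod.mk.injEq]; omega

theorem square_LR (x0 x1 y0 y1 : ℤ) (hx : x0 % 2 = 0) (hy : y0 % 2 = 0) (h : x0 ≤ x1)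
    (he : x1 - x0 = y1 - y0) (h2 : x1 % 2 = 0) : 1 / 2 ≤ Pr (LR x0 x1 y0 y1) := by
  refine (square_even ((x1 - x0) / 2).toNat).trans ?_
  refine CE_aff 1 1 x0 y0 (Or.inl rfl) (Or.inl rfl) hx hy ?_ ?_ ?_
  · intro c; simp only [mem_Rect]; omega
  · intro c; simp only [mem_ofPred_eq]; omega
  · intro c; simp only [mem_ofPred_eq]; omega

theorem square_TB (x0 x1 y0 y1 : ℤ) (hx : x0 % 2 = 0) (hy : y0 % 2 = 0) (h : x0 ≤ x1)
    (he : x1 - x0 = y1 - y0) (h2 : x1 % 2 = 0) : 1 / 2 ≤ Pr (TB x0 x1 y0 y1) := by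
  refine (square_LR y0 y1 x0 x1 hy hx (by omega) (by omega) (by omega)).trans ?_
  refine CE_swap ?_ ?_ ?_
  · intro c; simp only [mem_Rect]; omega
  · intro c; simp only [mem_ofPred_eq]; omega
  · intro c; simp only [mem_ofPred_eq]; omega




theorem H_half (m : ℕ) : 1 / 4 ≤ Pr (HL (-(2 * m)) (2 * m) (-(2 * m)) (2 * m) 0 (2 * m)) := by
  have h1 := square_LR (-(2 * m)) (2 * m) (-(2 * m)) (2 * m) (by omega) (by omega) (by omega)
    (by omega) (by omega)
  have h2 : Pr (HL (-(2 * m)) (2 * m) (-(2 * m)) (2 * m) (-(2 * m)) 0) ≤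
      Pr (HL (-(2 * m)) (2 * m) (-(2 * m)) (2 * m) 0 (2 * m)) := by
    refine CE_aff 1 (-1) 0 0 (Or.inl rfl) (Or.inr rfl) (by norm_num) (by norm_num) ?_ ?_ ?_
    · intro c; simp only [mem_Rect]; omega
    · intro c; simp only [mem_ofPred_eq]; omega
    · intro c; simp only [mem_ofPred_eq]; omega
  have h3 := Pr_union (A := LR (-(2 * m)) (2 * m) (-(2 * m)) (2 * m))
    (B := HL (-(2 * m)) (2 * m) (-(2 * m)) (2 * m) 0 (2 * m))
    (C := HL (-(2 * m)) (2 * m) (-(2 * m)) (2 * m) (-(2 * m)) 0) (by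
      rintro ω ⟨u, hu, v, hv, h⟩
      have hr := h.right.2
      simp only [mem_Rect, mem_ofPred_eq] at hr hv
      by_cases h0 : 0 ≤ v.2
      · exact Or.inl ⟨u, hu, v, ⟨hv, h0, by omega⟩, h⟩
      · exact Or.inr ⟨u, hu, v, ⟨hv, by omega, by omega⟩, h⟩)
  linarith

theorem alpha_exists (m : ℕ) : ∃ a : ℕ, a ≤ m ∧
    1 / 8 ≤ Pr (HL (-(2 * m)) (2 * m) (-(2 * m)) (2 * m) 0 (2 * a)) ∧
    1 / 8 ≤ Pr (HL (-(2 * m)) (2 * m) (-(2 * m)) (2 * m) (2 * a) (2 * m)) := by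
  classical
  have hex : ∃ a : ℕ, a ≤ m ∧ 1 / 8 ≤ Pr (HL (-(2 * m)) (2 * m) (-(2 * m)) (2 * m) 0 (2 * a)) :=
    ⟨m, le_rfl, by have := H_half m; linarith⟩
  obtain ⟨ha, hb⟩ := Nat.find_spec hex
  have hmin := fun b => Nat.find_min hex (m := b)
  set a := Nat.find hex
  refine ⟨a, ha, hb, ?_⟩
  rcases Nat.eq_zero_or_pos a with h0 | h0
  · have := H_half m
    rw [h0]; simp only [Nat.cast_zero, mul_zero]; linarith
  · have h1 := hmin (a - 1) (by omega)
    push Not at h1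
    have h2 := h1 (by omega)
    have h3 := Pr_union (A := HL (-(2 * m)) (2 * m) (-(2 * m)) (2 * m) 0 (2 * m))
      (B := HL (-(2 * m)) (2 * m) (-(2 * m)) (2 * m) 0 (2 * (a - 1 : ℕ)))
      (C := HL (-(2 * m)) (2 * m) (-(2 * m)) (2 * m) (2 * a) (2 * m)) (by
        rintro ω ⟨u, hu, v, ⟨hv1, hv2, hv3⟩, h⟩
        by_cases h0 : v.2 ≤ 2 * (a - 1 : ℕ)
        · exact Or.inl ⟨u, hu, v, ⟨hv1, hv2, h0⟩, h⟩
        · right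
          by_cases h5 : v.2 = 2 * a - 1
          · refine ⟨u, hu, (2 * m, 2 * a), ⟨rfl, le_rfl, by simp; omega⟩, h.step ?_ ⟨?_, ?_⟩⟩
            · unfold Adj4; simp; omega
            · left; simp
            · simp [mem_Rect]; omega
          · exact ⟨u, hu, v, ⟨hv1, by omega, hv3⟩, h⟩)
    have := H_half m
    linarith

/-- deterministic gluing on the right side -/
theorem glue_right (O : Set (ℤ × ℤ)) (n n' al al' : ℤ) (hn : n' ≤ n) (hn0 : 0 ≤ n') (hal : al ≤ 2 * al')
    (h0 : 0 ≤ al') (h0' : al' ≤ n') {l r g u d : ℤ × ℤ}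
    (h1 : Conn (O ∩ Rect (n' - 2 * n) n' (-n) n) l r) (hl : l.1 = n' - 2 * n) (hr : r.1 = n')
    (hr0 : 0 ≤ r.2) (hr1 : r.2 ≤ al)
    (hu : Conn (O ∩ Rect (-n') n' (al' - n') (al' + n')) g u)
    (hd : Conn (O ∩ Rect (-n') n' (al' - n') (al' + n')) g d)
    (hu1 : u.1 = n') (hu2 : 2 * al' ≤ u.2) (hd1 : d.1 = n') (hd2 : d.2 ≤ 0) :
    ∃ c, Conn (O ∩ Rect (n' - 2 * n) n' (-n) n) l c ∧
      Conn (O ∩ Rect (-n') n' (al' - n') (al' + n')) g c := by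
  by_cases e1 : r.2 = u.2
  · have : r = u := Prod.ext (by omega) e1
    exact ⟨r, h1, this ▸ hu⟩
  by_cases e2 : r.2 = d.2
  · have : r = d := Prod.ext (by omega) e2
    exact ⟨r, h1, this ▸ hd⟩
  set R1 := Rect (n' - 2 * n) n' (-n) n with hR1
  set Q := Rect (-n') n' (al' - n') (al' + n') with hQ
  let A : Set (ℤ × ℤ) := {c | Conn (O ∩ R1) l c} ∪ {(n' + 1, r.2)}
  let B : Set (ℤ × ℤ) := {c | Conn (O ∩ Q) g c} ∪ {c | c.1 = n' + 1 ∧ (u.2 ≤ c.2 ∨ c.2 ≤ d.2)}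
  have hrR := h1.right.2
  have huR := hu.right.2
  have hdR := hd.right.2
  simp only [hR1, hQ, mem_Rect] at hrR huR hdR
  have cA : Conn A l (n' + 1, r.2) := by
    refine (h1.comp.mono (S' := A) subset_union_left).step ?_ (Or.inr rfl)
    unfold Adj4; simp; omega
  have up : ∀ k : ℕ, Conn B (n' + 1, u.2) (n' + 1, u.2 + k) := by
    intro k
    induction k with
    | zero => simpa using Conn.refl (S := B) (a := (n' + 1, u.2)) (Or.inr ⟨rfl, Or.inl le_rfl⟩)
    | succ k ih =>
      refine ih.step ?_ (Or.inr ⟨rfl, Or.inl ?_⟩)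
      · unfold Adj4; simp; omega
      · simp; omega
  have down : ∀ k : ℕ, Conn B (n' + 1, d.2) (n' + 1, d.2 - k) := by
    intro k
    induction k with
    | zero => simpa using Conn.refl (S := B) (a := (n' + 1, d.2)) (Or.inr ⟨rfl, Or.inr le_rfl⟩)
    | succ k ih =>
      refine ih.step ?_ (Or.inr ⟨rfl, Or.inr ?_⟩)
      · unfold Adj4; simp; omega
      · simp; omega
  have cB : Conn B (n' + 1, -n) (n' + 1, 2 * n) := by
    have a1 := (down (d.2 + n).toNat).symm
    have a2 : Conn B (n' + 1, d.2) d := by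
      refine Conn.of_adj (Or.inr ⟨rfl, Or.inr le_rfl⟩) ?_ (Or.inl hd)
      unfold Adj4; simp; omega
    have a3 : Conn B d u := (hd.comp.mono (S' := B) subset_union_left).symm.trans
      (hu.comp.mono (S' := B) subset_union_left)
    have a4 : Conn B u (n' + 1, u.2) := by
      refine Conn.of_adj (Or.inl hu) ?_ (Or.inr ⟨rfl, Or.inl le_rfl⟩)
      unfold Adj4; simp; omega
    have a5 := up (2 * n - u.2).toNat
    have := (((a1.trans a2).trans a3).trans a4).trans a5
    rwa [show d.2 - ((d.2 + n).toNat : ℤ) = -n by omega,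
      show u.2 + ((2 * n - u.2).toNat : ℤ) = 2 * n by omega] at this
  obtain ⟨c, hc1, hc2⟩ := cross_inter (x0 := n' - 2 * n) (x1 := n' + 1) (y0 := -n) (y1 := 2 * n)
    (A := A) (B := B) (by
      rintro c (hc | rfl)
      · have := (Conn.right hc).2
        simp only [hR1, mem_Rect] at this; omega
      · simp; omega) (by
      rintro c (hc | hc)
      · have := (Conn.right hc).2
        simp only [hQ, mem_Rect] at this; omega
      · have := hc.1; omega) cA hl rfl cB rfl rfl
  have hcA := hc1.right
  have hcB := hc2.right
  rcases hcA with hcA | hcA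
  · rcases hcB with hcB | hcB
    · exact ⟨c, hcA, hcB⟩
    · exfalso
      have := (Conn.right hcA).2
      simp only [hR1, mem_Rect] at this
      have := hcB.1; omega
  · exfalso
    have hcA : c = (n' + 1, r.2) := hcA
    rcases hcB with hcB | hcB
    · have := (Conn.right hcB).2
      simp only [hQ, mem_Rect, hcA] at this
      omega
    · have := hcB.2
      simp only [hcA] at this
      omega

theorem glue_left (O : Set (ℤ × ℤ)) (n n' al al' : ℤ) (hn : n' ≤ n) (hn0 : 0 ≤ n') (hal : al ≤ 2 * al')
    (h0 : 0 ≤ al') (h0' : al' ≤ n') {l r g u d : ℤ × ℤ}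
    (h1 : Conn (O ∩ Rect (-n') (2 * n - n') (-n) n) l r) (hl : l.1 = 2 * n - n') (hr : r.1 = -n')
    (hr0 : 0 ≤ r.2) (hr1 : r.2 ≤ al)
    (hu : Conn (O ∩ Rect (-n') n' (al' - n') (al' + n')) g u)
    (hd : Conn (O ∩ Rect (-n') n' (al' - n') (al' + n')) g d)
    (hu1 : u.1 = -n') (hu2 : 2 * al' ≤ u.2) (hd1 : d.1 = -n') (hd2 : d.2 ≤ 0) :
    ∃ c, Conn (O ∩ Rect (-n') (2 * n - n') (-n) n) l c ∧
      Conn (O ∩ Rect (-n') n' (al' - n') (al' + n')) g c := by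
  let f : ℤ × ℤ → ℤ × ℤ := fun c => (-c.1, c.2)
  have hff : ∀ c, f (f c) = c := by intro c; simp [f]
  let O' : Set (ℤ × ℤ) := {c | f c ∈ O}
  have hadj : ∀ a b, Adj4 a b → Adj4 (f a) (f b) ∨ f a = f b := by
    intro a b h; left; unfold Adj4 at *; simp [f]; omega
  have e1 : ∀ c ∈ O ∩ Rect (-n') (2 * n - n') (-n) n, f c ∈ O' ∩ Rect (n' - 2 * n) n' (-n) n := by
    rintro c ⟨h1, h2⟩
    refine ⟨?_, ?_⟩
    · change f (f c) ∈ O; rwa [hff]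
    · simp only [mem_Rect, f] at *; omega
  have e1' : ∀ c ∈ O' ∩ Rect (n' - 2 * n) n' (-n) n, f c ∈ O ∩ Rect (-n') (2 * n - n') (-n) n := by
    rintro c ⟨h1, h2⟩
    refine ⟨h1, ?_⟩
    simp only [mem_Rect, f] at *; omega
  have e2 : ∀ c ∈ O ∩ Rect (-n') n' (al' - n') (al' + n'),
      f c ∈ O' ∩ Rect (-n') n' (al' - n') (al' + n') := by
    rintro c ⟨h1, h2⟩
    refine ⟨?_, ?_⟩
    · change f (f c) ∈ O; rwa [hff]
    · simp only [mem_Rect, f] at *; omega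
  have e2' : ∀ c ∈ O' ∩ Rect (-n') n' (al' - n') (al' + n'),
      f c ∈ O ∩ Rect (-n') n' (al' - n') (al' + n') := by
    rintro c ⟨h1, h2⟩
    refine ⟨h1, ?_⟩
    simp only [mem_Rect, f] at *; omega
  obtain ⟨c, hc1, hc2⟩ := glue_right O' n n' al al' hn hn0 hal h0 h0' (l := f l) (r := f r) (g := f g)
    (u := f u) (d := f d) (h1.map f e1 fun a b _ _ => hadj a b) (by simp [f]; omega)
    (by simp [f]; omega) (by simpa [f]) (by simpa [f]) (hu.map f e2 fun a b _ _ => hadj a b)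
    (hd.map f e2 fun a b _ _ => hadj a b) (by simp [f]; omega) (by simpa [f]) (by simp [f]; omega)
    (by simpa [f])
  refine ⟨f c, ?_, ?_⟩
  · have := hc1.map f e1' fun a b _ _ => hadj a b
    rwa [hff] at this
  · have := hc2.map f e2' fun a b _ _ => hadj a b
    rwa [hff] at this

theorem glue (m m' al al' : ℕ) (hm : m' ≤ m) (hm2 : m ≤ 2 * m') (hal : al ≤ 2 * al') (hal' : al' ≤ m')
    (H1 : 1 / 8 ≤ Pr (HL (-(2 * m)) (2 * m) (-(2 * m)) (2 * m) 0 (2 * al)))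
    (H2 : 1 / 8 ≤ Pr (HL (-(2 * m')) (2 * m') (-(2 * m')) (2 * m') (2 * al') (2 * m'))) :
    (1 / 8 : ℝ) ^ 6 * (1 / 2) ≤ Pr (LR (2 * m' - 4 * m) (4 * m - 2 * m') (-(2 * m)) (4 * m')) := by
  have hh1 : 1 / 8 ≤ Pr (HL (2 * m' - 2 * (2 * m)) (2 * m') (-(2 * m)) (2 * m) 0 (2 * al)) := by
    refine H1.trans (CE_aff 1 1 (2 * m' - 2 * m) 0 (Or.inl rfl) (Or.inl rfl) (by omega) (by omega) ?_ ?_ ?_)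
    all_goals intro c; simp only [mem_Rect, mem_ofPred_eq]; omega
  have hh2 : 1 / 8 ≤ Pr (HR (-(2 * m')) (2 * (2 * m) - 2 * m') (-(2 * m)) (2 * m) 0 (2 * al)) := by
    refine H1.trans (CE_aff (-1) 1 (2 * m - 2 * m') 0 (Or.inr rfl) (Or.inl rfl) (by omega) (by omega) ?_ ?_ ?_)
    all_goals intro c; simp only [mem_Rect, mem_ofPred_eq]; omega
  have g1 : 1 / 8 ≤ Pr (HL (-(2 * m')) (2 * m') (2 * al' - 2 * m') (2 * al' + 2 * m') (4 * al') (2 * al' + 2 * m')) := by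
    refine H2.trans (CE_aff 1 1 0 (2 * al') (Or.inl rfl) (Or.inl rfl) (by omega) (by omega) ?_ ?_ ?_)
    all_goals intro c; simp only [mem_Rect, mem_ofPred_eq]; omega
  have g2 : 1 / 8 ≤ Pr (HL (-(2 * m')) (2 * m') (2 * al' - 2 * m') (2 * al' + 2 * m') (2 * al' - 2 * m') 0) := by
    refine H2.trans (CE_aff 1 (-1) 0 (2 * al') (Or.inl rfl) (Or.inr rfl) (by omega) (by omega) ?_ ?_ ?_)
    all_goals intro c; simp only [mem_Rect, mem_ofPred_eq]; omega
  have g3 : 1 / 8 ≤ Pr (HR (-(2 * m')) (2 * m') (2 * al' - 2 * m') (2 * al' + 2 * m') (4 * al') (2 * al' + 2 * m')) := by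
    refine H2.trans (CE_aff (-1) 1 0 (2 * al') (Or.inr rfl) (Or.inl rfl) (by omega) (by omega) ?_ ?_ ?_)
    all_goals intro c; simp only [mem_Rect, mem_ofPred_eq]; omega
  have g4 : 1 / 8 ≤ Pr (HR (-(2 * m')) (2 * m') (2 * al' - 2 * m') (2 * al' + 2 * m') (2 * al' - 2 * m') 0) := by
    refine H2.trans (CE_aff (-1) (-1) 0 (2 * al') (Or.inr rfl) (Or.inr rfl) (by omega) (by omega) ?_ ?_ ?_)
    all_goals intro c; simp only [mem_Rect, mem_ofPred_eq]; omega
  have g5 := square_TB (-(2 * m')) (2 * m') (2 * al' - 2 * m') (2 * al' + 2 * m') (by omega) (by omega)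
    (by omega) (by omega) (by omega)
  have q1 := HL_incF.harris_le HR_incF hh1 hh2 (by norm_num)
  have q2 := (HL_incF.inter HR_incF).harris_le HL_incF q1 g1 (by norm_num)
  have q3 := ((HL_incF.inter HR_incF).inter HL_incF).harris_le HL_incF q2 g2 (by norm_num)
  have q4 := (((HL_incF.inter HR_incF).inter HL_incF).inter HL_incF).harris_le HR_incF q3 g3 (by norm_num)
  have q5 := ((((HL_incF.inter HR_incF).inter HL_incF).inter HL_incF).inter HR_incF).harris_le HR_incF q4 g4 (by norm_num)
  have q6 := (((((HL_incF.inter HR_incF).inter HL_incF).inter HL_incF).inter HR_incF).inter HR_incF).harris_le TB_incF q5 g5 (by norm_num)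
  refine le_trans (by norm_num) (q6.trans (Pr_mono ?_))
  rintro ω ⟨⟨⟨⟨⟨⟨⟨l1, hl1, r1, ⟨hr1, hr1', hr1''⟩, p1⟩, ⟨l2, hl2, r2, ⟨hr2, hr2', hr2''⟩, p2⟩⟩,
    ⟨a1, ha1, b1, ⟨hb1, hb1', hb1''⟩, w1⟩⟩, ⟨a2, ha2, b2, ⟨hb2, hb2', hb2''⟩, w2⟩⟩,
    ⟨a3, ha3, b3, ⟨hb3, hb3', hb3''⟩, w3⟩⟩, ⟨a4, ha4, b4, ⟨hb4, hb4', hb4''⟩, w4⟩⟩, ⟨g, hg, t, ht, w5⟩⟩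
  simp only [mem_ofPred_eq] at hl1 hl2 ha1 ha2 ha3 ha4 hg ht
  have hA : ∀ c ∈ Op ω ∩ Rect (-(2 * m')) (2 * m') (2 * al' - 2 * m') (2 * al' + 2 * m'),
      (2 * al' - 2 * m' : ℤ) ≤ c.2 ∧ c.2 ≤ 2 * al' + 2 * m' := fun c hc => hc.2.2.2
  have hB : ∀ c ∈ Op ω ∩ Rect (-(2 * m')) (2 * m') (2 * al' - 2 * m') (2 * al' + 2 * m'),
      (-(2 * m') : ℤ) ≤ c.1 ∧ c.1 ≤ 2 * m' := fun c hc => ⟨hc.2.1, hc.2.2.1⟩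
  have link : ∀ a b, Conn (Op ω ∩ Rect (-(2 * m')) (2 * m') (2 * al' - 2 * m') (2 * al' + 2 * m')) a b →
      a.1 = -(2 * m') → b.1 = 2 * m' →
      Conn (Op ω ∩ Rect (-(2 * m')) (2 * m') (2 * al' - 2 * m') (2 * al' + 2 * m')) g a := by
    intro a b h h1 h2
    obtain ⟨c, hc1, hc2⟩ := cross_inter hA hB h h1 h2 w5 hg ht
    exact hc2.trans hc1.symm
  have z1 := (link _ _ w1 ha1 hb1).trans w1
  have z2 := (link _ _ w2 ha2 hb2).trans w2
  have z3 := link _ _ w3.symm hb3 ha3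
  have z4 := link _ _ w4.symm hb4 ha4
  obtain ⟨c, hc1, hc2⟩ := glue_right (Op ω) (2 * m) (2 * m') (2 * al) (2 * al') (by omega) (by omega)
    (by omega) (by omega) (by omega) p1 hl1 hr1 hr1' hr1'' z1 z2 hb1 (by omega) hb2 (by omega)
  obtain ⟨d, hd1, hd2⟩ := glue_left (Op ω) (2 * m) (2 * m') (2 * al) (2 * al') (by omega) (by omega)
    (by omega) (by omega) (by omega) p2 hl2 hr2 hr2' hr2'' z3 z4 hb3 (by omega) hb4 (by omega)
  refine ⟨l1, by simp only [mem_ofPred_eq]; omega, l2, by simp only [mem_ofPred_eq]; omega, ?_⟩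
  have s1 : Op ω ∩ Rect (2 * m' - 2 * (2 * m)) (2 * m') (-(2 * m)) (2 * m) ⊆
      Op ω ∩ Rect (2 * m' - 4 * m) (4 * m - 2 * m') (-(2 * m)) (4 * m') := by
    refine inter_subset_inter_right _ ?_
    intro c; simp only [mem_Rect]; omega
  have s2 : Op ω ∩ Rect (-(2 * m')) (2 * (2 * m) - 2 * m') (-(2 * m)) (2 * m) ⊆
      Op ω ∩ Rect (2 * m' - 4 * m) (4 * m - 2 * m') (-(2 * m)) (4 * m') := by
    refine inter_subset_inter_right _ ?_
    intro c; simp only [mem_Rect]; omega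
  have s3 : Op ω ∩ Rect (-(2 * m')) (2 * m') (2 * al' - 2 * m') (2 * al' + 2 * m') ⊆
      Op ω ∩ Rect (2 * m' - 4 * m) (4 * m - 2 * m') (-(2 * m)) (4 * m') := by
    refine inter_subset_inter_right _ ?_
    intro c; simp only [mem_Rect]; omega
  exact (((hc1.mono s1).trans (hc2.symm.mono s3)).trans (hd2.mono s3)).trans (hd1.symm.mono s2)




theorem LR_double (W h : ℤ) (hW : W % 2 = 0) (hh : h % 2 = 0) (h0 : 0 ≤ h) (hWh : h ≤ W) (c : ℝ) (hc : 0 ≤ c)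
    (H : c ≤ Pr (LR 0 W 0 h)) : c * c * (1 / 2) ≤ Pr (LR 0 (2 * W - h) 0 h) := by
  have H2 : c ≤ Pr (LR (W - h) (2 * W - h) 0 h) := by
    refine H.trans (CE_aff 1 1 (W - h) 0 (Or.inl rfl) (Or.inl rfl) (by omega) (by omega) ?_ ?_ ?_)
    all_goals intro c; simp only [mem_Rect, mem_ofPred_eq]; omega
  have H3 := square_TB (W - h) W 0 h (by omega) (by omega) (by omega) (by omega) (by omega)
  have q1 := LR_incF.harris_le LR_incF H H2 hc
  have q2 := (LR_incF.inter LR_incF).harris_le TB_incF q1 H3 (by norm_num)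
  refine q2.trans (Pr_mono ?_)
  rintro ω ⟨⟨⟨l1, hl1, r1, hr1, p1⟩, ⟨l2, hl2, r2, hr2, p2⟩⟩, ⟨g, hg, t, ht, p3⟩⟩
  simp only [mem_ofPred_eq] at hl1 hr1 hl2 hr2 hg ht
  have s1 : Op ω ∩ Rect 0 W 0 h ⊆ Op ω ∩ Rect 0 (2 * W - h) 0 h := by
    refine inter_subset_inter_right _ ?_
    intro c; simp only [mem_Rect]; omega
  have s2 : Op ω ∩ Rect (W - h) (2 * W - h) 0 h ⊆ Op ω ∩ Rect 0 (2 * W - h) 0 h := by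
    refine inter_subset_inter_right _ ?_
    intro c; simp only [mem_Rect]; omega
  have s3 : Op ω ∩ Rect (W - h) W 0 h ⊆ Op ω ∩ Rect 0 (2 * W - h) 0 h := by
    refine inter_subset_inter_right _ ?_
    intro c; simp only [mem_Rect]; omega
  obtain ⟨a, ha1, ha2⟩ := cross_inter (x0 := 0) (x1 := W) (y0 := 0) (y1 := h) (fun c hc => hc.2.2.2)
    (fun c hc => ⟨by have := hc.2.1; omega, hc.2.2.1⟩) p1 hl1 hr1 p3 hg ht
  obtain ⟨b, hb1, hb2⟩ := cross_inter (x0 := W - h) (x1 := 2 * W - h) (y0 := 0) (y1 := h) (fun c hc => hc.2.2.2)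
    (fun c hc => ⟨hc.2.1, by have := hc.2.2.1; omega⟩) p2 hl2 hr2 p3 hg ht
  exact ⟨l1, hl1, r2, hr2, (((ha1.mono s1).trans (ha2.symm.mono s3)).trans (hb2.mono s3)).trans
    ((hb1.symm.trans p2).mono s2)⟩

theorem LR_shrink (x0 W W' y0 y1 : ℤ) (h0 : x0 ≤ W') (h : W' ≤ W) : LR x0 W y0 y1 ⊆ LR x0 W' y0 y1 := by
  rintro ω ⟨l, hl, r, hr, p⟩
  simp only [mem_ofPred_eq] at hl hr
  by_cases e : x0 = W'
  · subst e
    refine ⟨l, hl, l, hl, Conn.refl ⟨p.left.1, ?_⟩⟩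
    have := p.left.2
    simp only [mem_Rect] at *; omega
  obtain ⟨w, w', h1, h2, h3, h4⟩ := p.exit (T := {c | c.1 < W'}) (by simp only [mem_ofPred_eq]; omega)
    (by simp only [mem_ofPred_eq]; omega)
  have h5 := h1.right.2
  simp only [mem_ofPred_eq] at h4 h5
  have h6 : w'.1 = W' := by unfold Adj4 at h2; omega
  refine ⟨l, hl, w', h6, (h1.mono ?_).step h2 ⟨h3.1, ?_⟩⟩
  · rintro c ⟨⟨a, b⟩, d⟩
    refine ⟨a, ?_⟩
    simp only [mem_Rect, mem_ofPred_eq] at *; omega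
  · have := h3.2
    simp only [mem_Rect] at *; omega

theorem good_scale (α : ℕ → ℕ) (hα : ∀ m, α m ≤ m) (M : ℕ) :
    ∃ m', M ≤ m' ∧ α (m' + 3 * m' / 4) ≤ 2 * α m' := by
  by_contra hcon
  push Not at hcon
  let s : ℕ → ℕ := fun j => Nat.rec (M + 1) (fun _ x => x + 3 * x / 4) j
  have hs : ∀ j, s (j + 1) = s j + 3 * s j / 4 := fun j => rfl
  have hM : ∀ j, M ≤ s j := by
    intro j; induction j with
    | zero => simp [s]
    | succ j ih => rw [hs]; omega
  have h1 : ∀ j, 2 ^ j ≤ α (s (j + 1)) := by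
    intro j; induction j with
    | zero => have := hcon (s 0) (hM 0); rw [hs]; simp; omega
    | succ j ih => have := hcon (s (j + 1)) (hM (j + 1)); rw [hs (j + 1)]; rw [pow_succ]; omega
  have h2 : ∀ j, s j * 4 ^ j ≤ (M + 1) * 7 ^ j := by
    intro j; induction j with
    | zero => simp [s]
    | succ j ih =>
      have : 4 * s (j + 1) ≤ 7 * s j := by rw [hs]; omega
      calc s (j + 1) * 4 ^ (j + 1) = (4 * s (j + 1)) * 4 ^ j := by ring
        _ ≤ (7 * s j) * 4 ^ j := Nat.mul_le_mul_right _ this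
        _ = 7 * (s j * 4 ^ j) := by ring
        _ ≤ 7 * ((M + 1) * 7 ^ j) := Nat.mul_le_mul_left _ ih
        _ = _ := by ring
  obtain ⟨j, hj⟩ := pow_unbounded_of_one_lt (R := ℝ) (2 * (M + 1)) (y := 8 / 7) (by norm_num)
  have h3 := (h1 j).trans (hα _)
  have h4 := h2 (j + 1)
  have h5 : 2 ^ j * 4 ^ (j + 1) ≤ (M + 1) * 7 ^ (j + 1) := (Nat.mul_le_mul_right _ h3).trans h4
  have h6 : (2 : ℝ) ^ j * 4 ^ (j + 1) ≤ (M + 1) * 7 ^ (j + 1) := by exact_mod_cast h5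
  rw [div_pow, lt_div_iff₀ (by positivity)] at hj
  have h7 : (2 : ℝ) ^ j * 4 ^ (j + 1) = 4 * 8 ^ j := by
    rw [pow_succ, ← mul_assoc, ← mul_pow]; norm_num; ring
  rw [h7, pow_succ] at h6
  have : (0:ℝ) < (M + 1) * 7 ^ j := by positivity
  nlinarith

theorem long_cross : ∃ c : ℝ, 0 < c ∧ ∀ M : ℕ, ∃ h : ℤ, M ≤ h ∧ h % 2 = 0 ∧ c ≤ Pr (LR 0 (3 * h) 0 h) := by
  choose α ha hb hc using alpha_exists
  let c0 : ℝ := (1 / 8 : ℝ) ^ 6 * (1 / 2)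
  let c1 := c0 * c0 * (1 / 2)
  let c2 := c1 * c1 * (1 / 2)
  let c3 := c2 * c2 * (1 / 2)
  refine ⟨c3, by positivity, fun M => ?_⟩
  obtain ⟨m', h1, h2⟩ := good_scale α ha (M + 7)
  set m := m' + 3 * m' / 4 with hm
  have g := glue m m' (α m) (α m') (by omega) (by omega) h2 (ha m') (hb m) (hc m')
  have g0 : c0 ≤ Pr (LR 0 (8 * m - 4 * m') 0 (2 * m + 4 * m')) := by
    refine g.trans (CE_aff 1 1 (4 * m - 2 * m') (2 * m) (Or.inl rfl) (Or.inl rfl) (by omega) (by omega) ?_ ?_ ?_)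
    all_goals intro c; simp only [mem_Rect, mem_ofPred_eq]; omega
  have g1 := LR_double _ _ (by omega) (by omega) (by omega) (by omega) _ (by positivity) g0
  have g2 := LR_double _ _ (by omega) (by omega) (by omega) (by omega) _ (by positivity) g1
  have g3 := LR_double _ _ (by omega) (by omega) (by omega) (by omega) _ (by positivity) g2
  exact ⟨2 * m + 4 * m', by omega, by omega, g3.trans (Pr_mono (LR_shrink _ _ _ _ _ (by omega) (by omega)))⟩




theorem block (O : Set (ℤ × ℤ)) (a b : ℤ) (h0 : 0 < a) (hab : a < b) (f : ℤ × ℤ → ℤ × ℤ)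
    (hff : ∀ c, f (f c) = c) (hadj : ∀ c d, Adj4 c d → Adj4 (f c) (f d))
    (hbox : ∀ c ∈ Rect (-b) b (-b) b, f c ∈ Rect (-b) b (-b) b) (hf0 : f (0, 0) = (0, 0))
    {l r w : ℤ × ℤ} (hc : Conn (Oᶜ ∩ f ⁻¹' (Rect (-b) b a b)) l r)
    (hl : (f l).1 = -b) (hr : (f r).1 = b) (hw : Conn (O ∩ Rect (-b) b (-b) b) (0, 0) w) (hwb : (f w).2 = b) :
    False := by
  let O' : Set (ℤ × ℤ) := {c | f c ∈ O}
  have q1 : Conn (O'ᶜ ∩ Rect (-b) b a b) (f l) (f r) := by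
    refine hc.map f ?_ fun c d _ _ h => Or.inl (hadj c d h)
    rintro c ⟨h1, h2⟩
    exact ⟨by simpa [O', hff] using h1, h2⟩
  have q2 : Conn (O' ∩ Rect (-b) b (-b) b) (f (0, 0)) (f w) := by
    refine hw.map f ?_ fun c d _ _ h => Or.inl (hadj c d h)
    rintro c ⟨h1, h2⟩
    exact ⟨by simpa [O', hff] using h1, hbox c h2⟩
  rw [hf0] at q2
  obtain ⟨v, v', h1, h2, h3, h4⟩ := q2.symm.exit (T := {c | a < c.2}) (by simp only [mem_ofPred_eq]; omega)
    (by simp only [mem_ofPred_eq]; omega)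
  have h5 := h1.right.2
  simp only [mem_ofPred_eq] at h4 h5
  have h6 : v'.2 = a := by unfold Adj4 at h2; omega
  have h7 : Conn (O' ∩ Rect (-b) b a b) (f w) v' := by
    refine (h1.mono ?_).step h2 ⟨h3.1, ?_⟩
    · rintro c ⟨⟨h1, h2⟩, h3⟩
      refine ⟨h1, ?_⟩
      simp only [mem_Rect, mem_ofPred_eq] at *; omega
    · have := h3.2
      simp only [mem_Rect] at *; omega
  obtain ⟨c, hc1, hc2⟩ := cross_inter (x0 := -b) (x1 := b) (y0 := a) (y1 := b) (fun c hc => hc.2.2.2)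
    (fun c hc => ⟨hc.2.1, hc.2.2.1⟩) q1 hl hr h7.symm h6 hwb
  exact hc1.right.1 hc2.right.1

/-- dual configuration -/
def dualize (ω : ℤ × ℤ → Bool) : ℤ × ℤ → Bool := fun c => ! ω (c.1 - 1, c.2 - 1)

theorem dualize_pres : MeasurePreserving dualize (fair (ℤ × ℤ)) (fair (ℤ × ℤ)) :=
  fair_flip.comp (fair_comp (f := fun c : ℤ × ℤ => (c.1 - 1, c.2 - 1)) (by
    rintro ⟨a1, a2⟩ ⟨b1, b2⟩ h
    simp only [Prod.mk.injEq] at h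
    ext <;> simp <;> omega))

/-- four long crossings -/
def Ann (a b : ℤ) : Set (ℤ × ℤ → Bool) :=
  ((LR (1 - b) (b + 1) (a + 1) (b + 1) ∩ LR (1 - b) (b + 1) (1 - b) (1 - a)) ∩
    TB (a + 1) (b + 1) (1 - b) (b + 1)) ∩ TB (1 - b) (1 - a) (1 - b) (b + 1)

theorem Ann_incF (a b : ℤ) : IncF (Ann a b) :=
  ((LR_incF.inter LR_incF).inter TB_incF).inter TB_incF

theorem Ann_prob (a h : ℤ) (ha : a % 2 = 1) (hh : h % 2 = 0) (ha0 : 0 < a) (hah : 2 * a ≤ h) (c : ℝ) (hc : 0 ≤ c)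
    (H : c ≤ Pr (LR 0 (3 * h) 0 h)) : c ^ 4 ≤ Pr (Ann a (a + h)) := by
  have H' : c ≤ Pr (LR 0 (2 * (a + h)) 0 h) :=
    H.trans (Pr_mono (LR_shrink _ _ _ _ _ (by omega) (by omega)))
  have h1 : c ≤ Pr (LR (1 - (a + h)) ((a + h) + 1) (a + 1) ((a + h) + 1)) := by
    refine H'.trans (CE_aff 1 1 (1 - (a + h)) (a + 1) (Or.inl rfl) (Or.inl rfl) (by omega) (by omega) ?_ ?_ ?_)
    all_goals intro c; simp only [mem_Rect, mem_ofPred_eq]; omega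
  have h2 : c ≤ Pr (LR (1 - (a + h)) ((a + h) + 1) (1 - (a + h)) (1 - a)) := by
    refine H'.trans (CE_aff 1 1 (1 - (a + h)) (1 - (a + h)) (Or.inl rfl) (Or.inl rfl) (by omega) (by omega) ?_ ?_ ?_)
    all_goals intro c; simp only [mem_Rect, mem_ofPred_eq]; omega
  have h3 : c ≤ Pr (TB (a + 1) ((a + h) + 1) (1 - (a + h)) ((a + h) + 1)) := by
    refine h1.trans (CE_swap ?_ ?_ ?_)
    all_goals intro c; simp only [mem_Rect, mem_ofPred_eq]; omega
  have h4 : c ≤ Pr (TB (1 - (a + h)) (1 - a) (1 - (a + h)) ((a + h) + 1)) := by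
    refine h2.trans (CE_swap ?_ ?_ ?_)
    all_goals intro c; simp only [mem_Rect, mem_ofPred_eq]; omega
  have q1 := LR_incF.harris_le LR_incF h1 h2 hc
  have q2 := (LR_incF.inter LR_incF).harris_le TB_incF q1 h3 hc
  have q3 := ((LR_incF.inter LR_incF).inter TB_incF).harris_le TB_incF q2 h4 hc
  refine le_trans (le_of_eq (by ring)) q3

/-- the annulus as a finset -/
noncomputable def annF (a b : ℤ) : Finset (ℤ × ℤ) := RectF (-b) b (-b) b \ RectF (1 - a) (a - 1) (1 - a) (a - 1)

theorem Ann_depOn (a b : ℤ) (h0 : 0 < a) (hab : a < b) : DepOn (annF a b) (dualize ⁻¹' Ann a b) := by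
  classical
  have key : ∀ (x0 x1 y0 y1 : ℤ) (U V : Set (ℤ × ℤ)) (_ : ∀ c ∈ Rect x0 x1 y0 y1, (c.1 - 1, c.2 - 1) ∈ annF a b),
      DepOn (annF a b) (dualize ⁻¹' CE (Rect x0 x1 y0 y1) U V) := by
    intro x0 x1 y0 y1 U V hs ω ω' h h1
    refine (CE_inc (S := RectF x0 x1 y0 y1) fun _ h => mem_RectF.2 h).depOn (dualize ω) (dualize ω') ?_ h1
    intro c hc
    unfold dualize
    rw [h _ (hs c (mem_RectF.1 hc))]
  refine DepOn.inter (DepOn.inter (DepOn.inter ?_ ?_) ?_) ?_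
  all_goals
    refine key _ _ _ _ _ _ fun c hc => ?_
    simp only [annF, Finset.mem_sdiff, mem_RectF, mem_Rect] at *
    omega

set_option maxHeartbeats 2000000 in
theorem Ann_confine (a b : ℤ) (h0 : 0 < a) (hab : a < b) (ω : ℤ × ℤ → Bool) (hω : dualize ω ∈ Ann a b)
    (c : ℤ × ℤ) (hc : Conn (Op ω) (0, 0) c) : c ∈ Rect (-b) b (-b) b := by
  by_contra hcon
  obtain ⟨w, w', h1, h2, h3, h4⟩ := hc.exit (T := Rect (-b) b (-b) b) (by simp only [mem_Rect]; omega) hcon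
  obtain ⟨⟨⟨⟨l1, hl1, r1, hr1, p1⟩, ⟨l2, hl2, r2, hr2, p2⟩⟩, ⟨l3, hl3, r3, hr3, p3⟩⟩, ⟨l4, hl4, r4, hr4, p4⟩⟩ := hω
  simp only [mem_ofPred_eq] at hl1 hl2 hl3 hl4 hr1 hr2 hr3 hr4
  have sh : ∀ {x0 x1 y0 y1 : ℤ} {l r : ℤ × ℤ} (R : Set (ℤ × ℤ)), Conn (Op (dualize ω) ∩ Rect x0 x1 y0 y1) l r →
      (∀ c ∈ Rect x0 x1 y0 y1, (c.1 - 1, c.2 - 1) ∈ R) →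
      Conn ((Op ω)ᶜ ∩ R) (l.1 - 1, l.2 - 1) (r.1 - 1, r.2 - 1) := by
    intro x0 x1 y0 y1 l r R h hR
    refine h.map (fun c => (c.1 - 1, c.2 - 1)) ?_ ?_
    · rintro c ⟨h1, h2⟩
      refine ⟨?_, hR c h2⟩
      simp only [mem_compl_iff, mem_Op, dualize] at *
      rcases hb : ω (c.1 - 1, c.2 - 1) <;> simp [hb] at * <;> omega
    · intro c d _ _ h
      left; unfold Adj4 at *; simp only; omega
  have hwR := h1.right.2
  have hb : w.2 = b ∨ w.2 = -b ∨ w.1 = b ∨ w.1 = -b := by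
    unfold Adj4 at h2
    simp only [mem_Rect] at *; omega
  rcases hb with hb | hb | hb | hb
  · refine block (Op ω) a b h0 hab (fun c => c) (fun _ => rfl) (fun _ _ h => h) (fun _ h => h) rfl
      (sh _ p1 ?_) (by simp only; omega) (by simp only; omega) h1 hb
    intro c; simp only [mem_Rect, mem_preimage]; omega
  · refine block (Op ω) a b h0 hab (fun c => (c.1, -c.2)) (fun _ => by simp) (fun _ _ h => ?_) (fun _ h => ?_) rfl
      (sh _ p2 ?_) (by simp only; omega) (by simp only; omega) h1 (by simp only; omega)
    · unfold Adj4 at *; simp only; omega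
    · simp only [mem_Rect] at *; omega
    · intro c; simp only [mem_Rect, mem_preimage]; omega
  · refine block (Op ω) a b h0 hab (fun c => (c.2, c.1)) (fun _ => by simp) (fun _ _ h => ?_) (fun _ h => ?_) rfl
      (sh _ p3 ?_) (by simp only; omega) (by simp only; omega) h1 (by simp only; omega)
    · unfold Adj4 at *; simp only; omega
    · simp only [mem_Rect] at *; omega
    · intro c; simp only [mem_Rect, mem_preimage]; omega
  · refine block (Op ω) a b h0 hab (fun c => (-c.2, -c.1)) (fun _ => by simp) (fun _ _ h => ?_) (fun _ h => ?_) rfl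
      (sh _ p4 ?_).symm (by simp only; omega) (by simp only; omega) h1 (by simp only; omega)
    · unfold Adj4 at *; simp only; omega
    · simp only [mem_Rect] at *; omega
    · intro c; simp only [mem_Rect, mem_preimage]; omega

/-- infinite cluster event -/
def InfE : Set (ℤ × ℤ → Bool) := {ω | {c | Conn (Op ω) (0, 0) c}.Infinite}

theorem fair_null : fair (ℤ × ℤ) InfE = 0 := by
  classical
  obtain ⟨c, hc, hlong⟩ := long_cross
  have key : ∀ J : ℕ, ∃ (A : Set (ℤ × ℤ → Bool)) (S : Finset (ℤ × ℤ)), DepOn S A ∧ InfE ⊆ A ∧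
      Pr A ≤ (1 - c ^ 4) ^ J := by
    intro J
    induction J with
    | zero => exact ⟨univ, ∅, fun _ _ _ _ => trivial, subset_univ _, by simpa using Pr_le_one _⟩
    | succ J ih =>
      obtain ⟨A, S, h1, h2, h3⟩ := ih
      obtain ⟨N, hN⟩ : ∃ N : ℕ, ∀ d ∈ S, |d.1| ≤ N ∧ |d.2| ≤ N := by
        refine ⟨S.sup (fun d => d.1.natAbs + d.2.natAbs), fun d hd => ?_⟩
        have := Finset.le_sup (f := fun d : ℤ × ℤ => d.1.natAbs + d.2.natAbs) hd
        simp only [abs_le]; omega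
      obtain ⟨h, hM, hpar, hh⟩ := hlong (4 * N + 2)
      have hM' : (4 * N + 2 : ℤ) ≤ h := by exact_mod_cast hM
      have hp := Ann_prob (2 * N + 1) h (by omega) hpar (by omega) (by omega) c hc.le hh
      have hd := Ann_depOn (2 * N + 1) (2 * N + 1 + h) (by omega) (by omega)
      have hcf := Ann_confine (2 * N + 1) (2 * N + 1 + h) (by omega) (by omega)
      generalize (2 * N + 1 + h : ℤ) = b at *
      set E := dualize ⁻¹' Ann (2 * N + 1) b with hE
      have hPE : c ^ 4 ≤ Pr E := by
        refine hp.trans (Pr_preserving dualize_pres (Ann_incF _ _).meas fun ω h => h)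
      refine ⟨A ∩ Eᶜ, S ∪ annF (2 * N + 1) b,
        (h1.mono Finset.subset_union_left).inter (hd.compl.mono Finset.subset_union_right), ?_, ?_⟩
      · intro ω hω
        refine ⟨h2 hω, fun hωE => ?_⟩
        refine hω ((RectF (-b) b (-b) b).finite_toSet.subset ?_)
        intro x hx
        exact mem_RectF.2 (hcf ω hωE x hx)
      · have hdisj : Disjoint S (annF (2 * N + 1) b) := by
          rw [Finset.disjoint_left]
          intro d hd hd'
          have := hN d hd
          simp only [annF, Finset.mem_sdiff, mem_RectF, mem_Rect, abs_le] at *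
          omega
        have h5 : Pr (A ∩ Eᶜ) = Pr A * Pr Eᶜ := fair_indep h1 hd.compl hdisj
        have h6 : Pr Eᶜ = 1 - Pr E := by
          unfold Pr; rw [measureReal_compl hd.meas]; simp
        rw [h5, pow_succ]
        exact mul_le_mul h3 (by linarith) (Pr_nonneg _) ((Pr_nonneg _).trans h3)
  have hc1 : c ^ 4 ≤ 1 := by
    obtain ⟨h, -, -, hh⟩ := hlong 0
    exact pow_le_one₀ hc.le (hh.trans (Pr_le_one _))
  have hc4 : 0 < c ^ 4 := by positivity
  have hle : ∀ J : ℕ, Pr InfE ≤ (1 - c ^ 4) ^ J := fun J => by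
    obtain ⟨A, S, -, h2, h3⟩ := key J
    exact (Pr_mono h2).trans h3
  have hlim := tendsto_pow_atTop_nhds_zero_of_lt_one (r := 1 - c ^ 4) (by linarith) (by linarith)
  have h0 : Pr InfE ≤ 0 := ge_of_tendsto' hlim hle
  have h00 : Pr InfE = 0 := le_antisymm h0 (Pr_nonneg _)
  unfold Pr Measure.real at h00
  rcases (ENNReal.toReal_eq_zero_iff _).1 h00 with h | h
  · exact h
  · exact absurd h (measure_ne_top _ _)




/-- uniform measure on the unit interval -/
noncomputable def lam : Measure ℝ := volume.restrict (Set.Ico (0 : ℝ) 1)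

instance : IsProbabilityMeasure lam := ⟨by simp [lam]⟩

theorem binDigit_meas (n : ℕ) : Measurable (binDigit n) := by
  unfold binDigit
  refine measurable_to_bool ?_
  have : (fun x : ℝ => decide (⌊x * 2 ^ (n + 1)⌋ % 2 = 1)) ⁻¹' {true} =
      (fun x : ℝ => ⌊x * 2 ^ (n + 1)⌋) ⁻¹' {k | k % 2 = 1} := by
    ext x; simp
  rw [this]
  exact (Int.measurable_floor.comp (measurable_id.mul_const _)) (MeasurableSet.of_discrete)

/-- all digits -/
noncomputable def digits (x : ℝ) : ℕ → Bool := fun n => binDigit n x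

theorem digits_meas : Measurable digits := measurable_pi_iff.2 fun n => binDigit_meas n

theorem floor_succ (x : ℝ) (n : ℕ) :
    ⌊x * 2 ^ (n + 1)⌋ = 2 * ⌊x * 2 ^ n⌋ + (if binDigit n x then 1 else 0) := by
  have h := Int.floor_div_natCast (x * 2 ^ (n + 1)) 2
  have e : x * 2 ^ (n + 1) / (2 : ℕ) = x * 2 ^ n := by rw [pow_succ]; push_cast; ring
  rw [e] at h
  unfold binDigit
  simp only [decide_eq_true_eq]
  split_ifs <;> omega

theorem prefix_floor (b : ℕ → Bool) (n : ℕ) :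
    ∃ k : ℤ, ∀ x, (x ∈ Ico (0 : ℝ) 1 ∧ ∀ i < n, binDigit i x = b i) ↔ ⌊x * 2 ^ n⌋ = k := by
  induction n with
  | zero => exact ⟨0, fun x => by simp [Int.floor_eq_iff]⟩
  | succ n ih =>
    obtain ⟨k, hk⟩ := ih
    refine ⟨2 * k + (if b n then 1 else 0), fun x => ?_⟩
    have h1 : (x ∈ Ico (0 : ℝ) 1 ∧ ∀ i < n + 1, binDigit i x = b i) ↔
        (x ∈ Ico (0 : ℝ) 1 ∧ ∀ i < n, binDigit i x = b i) ∧ binDigit n x = b n := by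
      rw [and_assoc]
      refine and_congr_right fun _ => ?_
      constructor
      · intro h; exact ⟨fun i hi => h i (by omega), h n (by omega)⟩
      · rintro ⟨h, h'⟩ i hi
        rcases Nat.lt_succ_iff_lt_or_eq.1 hi with h1 | rfl
        · exact h i h1
        · exact h'
    rw [h1, hk, floor_succ]
    rcases binDigit n x <;> rcases b n <;> simp <;> omega

theorem prefix_measure (b : ℕ → Bool) (n : ℕ) :
    lam {x | ∀ i < n, binDigit i x = b i} = (2⁻¹ : ℝ≥0∞) ^ n := by
  obtain ⟨k, hk⟩ := prefix_floor b n
  have hm : MeasurableSet {x : ℝ | ∀ i < n, binDigit i x = b i} := by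
    have : {x : ℝ | ∀ i < n, binDigit i x = b i} = ⋂ i, ⋂ (_ : i < n), binDigit i ⁻¹' {b i} := by
      ext x; simp
    rw [this]
    exact MeasurableSet.iInter fun i => MeasurableSet.iInter fun _ => binDigit_meas i (by simp)
  rw [lam, Measure.restrict_apply hm]
  have h2 : (0:ℝ) < 2 ^ n := by positivity
  have : {x | ∀ i < n, binDigit i x = b i} ∩ Ico (0:ℝ) 1 = Ico ((k : ℝ) / 2 ^ n) (((k : ℝ) + 1) / 2 ^ n) := by
    ext x
    rw [inter_comm]
    change (x ∈ Ico (0 : ℝ) 1 ∧ ∀ i < n, binDigit i x = b i) ↔ _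
    rw [hk, Int.floor_eq_iff, mem_Ico, div_le_iff₀ h2, lt_div_iff₀ h2]
  rw [this, Real.volume_Ico, ← sub_div, add_sub_cancel_left, one_div, ← inv_pow,
    ENNReal.ofReal_pow (by positivity), ENNReal.ofReal_inv_of_pos (by norm_num)]
  simp

theorem digits_law : lam.map digits = fair ℕ := by
  have : IsProbabilityMeasure (lam.map digits) := Measure.isProbabilityMeasure_map digits_meas.aemeasurable
  refine IsProjectiveLimit.unique (P := fun I => (fair ℕ).map I.restrict) ?_ (fun I => rfl)
  have key : ∀ n, (lam.map digits).map (Finset.range n).restrict = (fair ℕ).map (Finset.range n).restrict := by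
    intro n
    refine Measure.ext_of_singleton fun σ => ?_
    unfold fair
    rw [Measure.infinitePi_map_restrict, Measure.pi_singleton,
      Measure.map_apply (Finset.measurable_restrict _) (measurableSet_singleton _),
      Measure.map_apply digits_meas ((Finset.measurable_restrict _) (measurableSet_singleton _))]
    simp only [coin_singleton, Finset.prod_const, Finset.card_univ, Fintype.card_coe, Finset.card_range]
    rw [← prefix_measure (fun i => if h : i ∈ Finset.range n then σ ⟨i, h⟩ else false) n]
    congr 1
    ext x
    simp only [mem_preimage, mem_singleton_iff, funext_iff, mem_ofPred_eq]
    constructor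
    · intro h i hi
      rw [dif_pos (Finset.mem_range.2 hi)]
      exact h ⟨i, Finset.mem_range.2 hi⟩
    · rintro h ⟨i, hi⟩
      have := h i (Finset.mem_range.1 hi)
      rw [dif_pos hi] at this
      exact this
  intro I
  obtain ⟨n, hn⟩ : ∃ n, I ⊆ Finset.range n := I.exists_nat_subset_range
  have e : (I.restrict : (ℕ → Bool) → (I → Bool)) = Finset.restrict₂ hn ∘ (Finset.range n).restrict := rfl
  rw [e, ← Measure.map_map (Finset.measurable_restrict₂ hn) (Finset.measurable_restrict _), key,
    Measure.map_map (Finset.measurable_restrict₂ hn) (Finset.measurable_restrict _)]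
  rfl

/-- value of a digit sequence -/
noncomputable def bval (b : ℕ → Bool) : ℝ := ∑' n : ℕ, if b n then ((2 : ℝ) ^ (n + 1))⁻¹ else 0

theorem bval_summable (b : ℕ → Bool) : Summable (fun n : ℕ => if b n then ((2 : ℝ) ^ (n + 1))⁻¹ else 0) := by
  refine Summable.of_nonneg_of_le (f := fun n : ℕ => (1 / 2 : ℝ) ^ (n + 1)) ?_ ?_ ?_
  · intro n; split_ifs <;> positivity
  · intro n; rw [one_div, inv_pow]; split_ifs
    · exact le_rfl
    · positivity
  · exact (summable_nat_add_iff 1).2 (summable_geometric_of_lt_one (by norm_num) (by norm_num))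

theorem bval_meas : Measurable bval := by
  refine measurable_of_tendsto_metrizable (f := fun n b => ∑ i ∈ Finset.range n, if b i then ((2 : ℝ) ^ (i + 1))⁻¹ else 0) ?_ ?_
  · intro n
    refine Finset.measurable_sum _ fun i _ => ?_
    exact (measurable_from_top (f := fun b : Bool => if b then ((2 : ℝ) ^ (i + 1))⁻¹ else 0)).comp (measurable_pi_apply i)
  · rw [tendsto_pi_nhds]
    intro b
    exact (bval_summable b).hasSum.tendsto_sum_nat

theorem bval_digits (x : ℝ) (hx : x ∈ Ico (0 : ℝ) 1) : bval (digits x) = x := by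
  have h1 := (bval_summable (digits x)).hasSum.tendsto_sum_nat
  have h2 : ∀ n, ∑ i ∈ Finset.range n, (if digits x i then ((2 : ℝ) ^ (i + 1))⁻¹ else 0) = ⌊x * 2 ^ n⌋ / 2 ^ n := by
    intro n
    induction n with
    | zero =>
      have : ⌊x⌋ = 0 := by rw [Int.floor_eq_iff]; simpa using hx
      simp [this]
    | succ n ih =>
      rw [Finset.sum_range_succ, ih, floor_succ]
      unfold digits
      split_ifs <;> push_cast <;> field_simp <;> ring
  simp only [h2] at h1
  refine tendsto_nhds_unique h1 ?_
  have h3 : Filter.Tendsto (fun n : ℕ => x - (1 / 2 : ℝ) ^ n) Filter.atTop (nhds x) := by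
    have := (tendsto_pow_atTop_nhds_zero_of_lt_one (r := (1/2 : ℝ)) (by norm_num) (by norm_num)).const_sub x
    simpa using this
  refine tendsto_of_tendsto_of_tendsto_of_le_of_le h3 tendsto_const_nhds ?_ ?_
  · intro n
    dsimp only
    have h2 : (0:ℝ) < 2 ^ n := by positivity
    rw [le_div_iff₀ h2, sub_mul, ← mul_pow]
    have := Int.lt_floor_add_one (x * 2 ^ n)
    norm_num
    linarith
  · intro n
    have h2 : (0:ℝ) < 2 ^ n := by positivity
    dsimp only
    rw [div_le_iff₀ h2]
    exact Int.floor_le _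

theorem unif_bern (p : ℝ) (h0 : 0 ≤ p) (h1 : p ≤ 1) :
    (fair ℕ).map (fun b => decide (bval b < p)) = bern p := by
  have hm : Measurable (fun b => decide (bval b < p)) := by
    refine measurable_to_bool ?_
    have : (fun b => decide (bval b < p)) ⁻¹' {true} = bval ⁻¹' (Iio p) := by ext; simp
    rw [this]; exact bval_meas measurableSet_Iio
  have hb := bern_prob h0 h1
  have key : (fair ℕ).map (fun b => decide (bval b < p)) {true} = bern p {true} := by
    rw [← digits_law, Measure.map_map hm digits_meas, Measure.map_apply (hm.comp digits_meas) (by simp)]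
    have hms := (hm.comp digits_meas) (measurableSet_singleton true)
    rw [lam, Measure.restrict_apply hms]
    have : ((fun b => decide (bval b < p)) ∘ digits) ⁻¹' {true} ∩ Ico (0:ℝ) 1 = Ico 0 p := by
      ext x
      simp only [mem_inter_iff, mem_preimage, Function.comp, mem_singleton_iff, decide_eq_true_eq]
      constructor
      · rintro ⟨h, h'⟩; rw [bval_digits x h'] at h; exact ⟨h'.1, h⟩
      · rintro ⟨h, h'⟩
        have : x ∈ Ico (0:ℝ) 1 := ⟨h, by linarith⟩
        exact ⟨by rwa [bval_digits x this], this⟩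
    rw [this]; simp [bern]
  have hp : IsProbabilityMeasure ((fair ℕ).map (fun b => decide (bval b < p))) :=
    Measure.isProbabilityMeasure_map hm.aemeasurable
  refine Measure.ext_of_singleton fun b => ?_
  cases b
  · have e : ({false} : Set Bool) = {true}ᶜ := by ext b; cases b <;> simp
    rw [e, prob_compl_eq_one_sub (by simp), prob_compl_eq_one_sub (by simp), key]
  · exact key

theorem bernoulliProduct_eq {ι : Type} [Encodable ι] (P : ι → ℝ) (h0 : ∀ i, 0 ≤ P i) (h1 : ∀ i, P i ≤ 1) :
    bernoulliProduct P = Measure.infinitePi (fun i => bern (P i)) := by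
  have hm : ∀ p : ℝ, Measurable (fun b => decide (bval b < p)) := by
    intro p
    refine measurable_to_bool ?_
    have : (fun b => decide (bval b < p)) ⁻¹' {true} = bval ⁻¹' (Iio p) := by ext; simp
    rw [this]; exact bval_meas measurableSet_Iio
  have e1 : (fair ℕ).map (fun b (q : ι × ℕ) => b (Nat.pair (Encodable.encode q.1) q.2)) = fair (ι × ℕ) := by
    refine (fair_comp (f := fun q : ι × ℕ => Nat.pair (Encodable.encode q.1) q.2) ?_).map_eq
    rintro ⟨a, n⟩ ⟨b, m⟩ h
    simp only [Nat.pair_eq_pair] at h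
    exact Prod.ext (Encodable.encode_injective h.1) h.2
  have e2 := Measure.infinitePi_map_curry (fun (_ : ι) (_ : ℕ) => coin)
  have e3 := Measure.infinitePi_map_pi (fun (_ : ι) => fair ℕ) (fun i => hm (P i))
  simp only [unif_bern _ (h0 _) (h1 _)] at e3
  rw [← e3]
  change (Measure.map (MeasurableEquiv.curry ι ℕ Bool) (fair (ι × ℕ))) = Measure.infinitePi (fun (_ : ι) => fair ℕ) at e2
  rw [← e2, ← e1, ← digits_law]
  have m1 : Measurable (fun (b : ℕ → Bool) (q : ι × ℕ) => b (Nat.pair (Encodable.encode q.1) q.2)) := by fun_prop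
  have m3 : Measurable (fun (x : ι → ℕ → Bool) i => decide (bval (x i) < P i)) :=
    measurable_pi_iff.2 fun i => (hm (P i)).comp (measurable_pi_apply i)
  rw [Measure.map_map m1 digits_meas, Measure.map_map (MeasurableEquiv.measurable _) (m1.comp digits_meas),
    Measure.map_map m3 ((MeasurableEquiv.measurable _).comp (m1.comp digits_meas))]
  rfl




/-! ### Star decomposition -/

/-- odd sites -/
abbrev Jt : Type := {x : ℤ × ℤ // (x.1 + x.2) % 2 = 1}

/-- labels of the edges in a star -/
abbrev Lab (k : ℕ) : Type := Option (Fin 4) × Fin (k + 1)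

/-- first coordinate of the direction -/
def dx : Fin 4 → ℤ
  | 0 => 1
  | 1 => 0
  | 2 => -1
  | 3 => 0

/-- second coordinate of the direction -/
def dy : Fin 4 → ℤ
  | 0 => 0
  | 1 => 1
  | 2 => 0
  | 3 => -1

/-- edges in a star -/
def emap0 (u v z : ℤ) : Option (Fin 4) → EdgeIdx
  | none => ((u, v, z), 2)
  | some 0 => ((u, v, z), 0)
  | some 1 => ((u, v, z), 1)
  | some 2 => ((u - 1, v, z), 0)
  | some 3 => ((u, v - 1, z), 1)

/-- the edge map -/
def emap (k : ℕ) (i : Jt × Lab k) : EdgeIdx := emap0 i.1.1.1 i.1.1.2 (i.2.2 : ℕ) i.2.1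

/-- the fine cells around an odd site -/
def fc (i : Jt × Fin 4) : ℤ × ℤ := (2 * i.1.1.1 + dx i.2, 2 * i.1.1.2 + dy i.2)

theorem emap_inj (k : ℕ) : Function.Injective (emap k) := by
  rintro ⟨⟨⟨u, v⟩, h⟩, ⟨o, z⟩⟩ ⟨⟨⟨u', v'⟩, h'⟩, ⟨o', z'⟩⟩ he
  simp only [emap] at he
  simp only at h h'
  have key : u = u' ∧ v = v' ∧ (z : ℕ) = (z' : ℕ) ∧ o = o' := by
    rcases o with _ | o <;> rcases o' with _ | o'
    · simp [emap0] at he; simp; omega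
    · fin_cases o' <;> simp [emap0] at he
    · fin_cases o <;> simp [emap0] at he
    · fin_cases o <;> fin_cases o' <;> simp [emap0] at he <;> simp <;> omega
  obtain ⟨rfl, rfl, hz, rfl⟩ := key
  have : z = z' := Fin.ext hz
  subst this
  rfl

theorem fc_inj : Function.Injective fc := by
  rintro ⟨⟨⟨u, v⟩, h⟩, d⟩ ⟨⟨⟨u', v'⟩, h'⟩, d'⟩ he
  simp only [fc] at he
  simp only at h h'
  have key : u = u' ∧ v = v' ∧ d = d' := by
    fin_cases d <;> fin_cases d' <;> simp [dx, dy] at he <;> simp <;> omega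
  obtain ⟨rfl, rfl, rfl⟩ := key
  rfl

theorem fc_range (c : ℤ × ℤ) (hc : c.1 % 2 ≠ c.2 % 2) : ∃ i, fc i = c := by
  obtain ⟨a, b⟩ := c
  simp only at hc
  rcases Int.emod_two_eq a with ha | ha
  · by_cases hp : (a / 2 + b / 2) % 2 = 1
    · exact ⟨(⟨(a / 2, b / 2), hp⟩, 1), by simp [fc, dx, dy]; omega⟩
    · exact ⟨(⟨(a / 2, b / 2 + 1), by simp only; omega⟩, 3), by simp [fc, dx, dy]; omega⟩
  · by_cases hp : (a / 2 + b / 2) % 2 = 1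
    · exact ⟨(⟨(a / 2, b / 2), hp⟩, 0), by simp [fc, dx, dy]; omega⟩
    · exact ⟨(⟨(a / 2 + 1, b / 2), by simp only; omega⟩, 2), by simp [fc, dx, dy]; omega⟩

/-- vertical adjacency in the central column of a star -/
def VA {k : ℕ} (η : Lab k → Bool) (z z' : Fin (k + 1)) : Prop :=
  ((z' : ℕ) = z + 1 ∧ η (none, z) = true) ∨ ((z : ℕ) = z' + 1 ∧ η (none, z') = true)

def Rel {k : ℕ} (η : Lab k → Bool) (d d' : Fin 4) : Prop :=
  ∃ z z', η (some d, z) = true ∧ Relation.ReflTransGen (VA η) z z' ∧ η (some d', z') = true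

theorem fine_step (A : ℤ × ℤ → Bool) (x : Jt) (d d' : Fin 4) (h : A (fc (x, d)) = true) (h' : A (fc (x, d')) = true) :
    Conn (Op A) (2 * (x.1.1 + dx d), 2 * (x.1.2 + dy d)) (2 * (x.1.1 + dx d'), 2 * (x.1.2 + dy d')) := by
  have key : ∀ e : Fin 4, A (fc (x, e)) = true →
      Conn (Op A) (2 * x.1.1, 2 * x.1.2) (2 * (x.1.1 + dx e), 2 * (x.1.2 + dy e)) := by
    intro e he
    have h0 : ((2 * x.1.1, 2 * x.1.2) : ℤ × ℤ) ∈ Op A := by left; simp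
    have h1 : fc (x, e) ∈ Op A := by
      right; refine ⟨?_, he⟩
      fin_cases e <;> simp [fc, dx, dy]
    have h2 : ((2 * (x.1.1 + dx e), 2 * (x.1.2 + dy e)) : ℤ × ℤ) ∈ Op A := by left; simp
    refine ((Conn.refl h0).step (c := fc (x, e)) ?_ h1).step ?_ h2
    · unfold Adj4; fin_cases e <;> simp [fc, dx, dy]
    · unfold Adj4; fin_cases e <;> simp [fc, dx, dy] <;> omega
  exact (key d h).symm.trans (key d' h')

theorem horiz_cases {k : ℕ} {ω : Config} {u v z u' v' z' : ℤ} (h : OpenAdj k ω (u, v, z) (u', v', z')) :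
    (u' = u ∧ v' = v ∧ ((z' = z + 1 ∧ ω ((u, v, z), 2) = true) ∨ (z = z' + 1 ∧ ω ((u, v, z'), 2) = true))) ∨
    (z' = z ∧ ∃ d, u' = u + dx d ∧ v' = v + dy d ∧ ω (emap0 u v z (some d)) = true ∧
      ∃ d', u = u' + dx d' ∧ v = v' + dy d' ∧ ω (emap0 u' v' z (some d')) = true) := by
  obtain ⟨i, h | h⟩ := h
  · obtain ⟨h1, -, h3⟩ := h
    fin_cases i <;> simp [dvec, Prod.ext_iff] at h1 h3 ⊢ <;> obtain ⟨rfl, rfl, rfl⟩ := h1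
    · right; exact ⟨rfl, 0, by simp [dx], by simp [dy], h3, 2, by simp [dx], by simp [dy], by simpa [emap0] using h3⟩
    · right; exact ⟨rfl, 1, by simp [dx], by simp [dy], h3, 3, by simp [dx], by simp [dy], by simpa [emap0] using h3⟩
    · left; exact ⟨rfl, rfl, Or.inl ⟨rfl, h3⟩⟩
  · obtain ⟨h1, -, h3⟩ := h
    fin_cases i <;> simp [dvec, Prod.ext_iff] at h1 h3 ⊢ <;> obtain ⟨rfl, rfl, rfl⟩ := h1
    · right; exact ⟨rfl, 2, by simp [dx], by simp [dy], by simpa [emap0] using h3, 0, by simp [dx], by simp [dy], h3⟩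
    · right; exact ⟨rfl, 3, by simp [dx], by simp [dy], by simpa [emap0] using h3, 1, by simp [dx], by simp [dy], h3⟩
    · left; exact ⟨rfl, rfl, Or.inr ⟨rfl, h3⟩⟩

theorem OpenAdj.slab {k : ℕ} {ω : Config} {x y : Vtx} (h : OpenAdj k ω x y) : InSlab k x ∧ InSlab k y := by
  obtain ⟨i, h | h⟩ := h
  · obtain ⟨rfl, h2, -⟩ := h
    exact h2
  · obtain ⟨rfl, h2, -⟩ := h
    exact ⟨h2.2, h2.1⟩

theorem dx_dy_parity (d : Fin 4) : (dx d + dy d) % 2 = 1 := by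
  fin_cases d <;> simp [dx, dy]

/-- The invariant along an open path. -/
def PathInv (k : ℕ) (ω : Config) (A : ℤ × ℤ → Bool) (w : Vtx) : Prop :=
  InSlab k w ∧ ((w.1 + w.2.1) % 2 = 0 → Conn (Op A) (0, 0) (2 * w.1, 2 * w.2.1)) ∧
  ∀ (h : (w.1 + w.2.1) % 2 = 1) (z : Fin (k + 1)), ((z : ℕ) : ℤ) = w.2.2 → ∃ (d : Fin 4) (z' : Fin (k + 1)),
    Conn (Op A) (0, 0) (2 * (w.1 + dx d), 2 * (w.2.1 + dy d)) ∧
    ω (emap k (⟨(w.1, w.2.1), h⟩, (some d, z'))) = true ∧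
    Relation.ReflTransGen (VA (fun l => ω (emap k (⟨(w.1, w.2.1), h⟩, l)))) z' z

theorem path_inv (k : ℕ) (ω : Config) (A : ℤ × ℤ → Bool)
    (H : ∀ x d d', Rel (fun l => ω (emap k (x, l))) d d' → d ≠ d' → A (fc (x, d)) = true ∧ A (fc (x, d')) = true)
    (w : Vtx) (hw : w ∈ cluster k ω 0) : PathInv k ω A w := by
  have hw' : Relation.ReflTransGen (OpenAdj k ω) 0 w := hw
  induction hw' with
  | refl =>
    refine ⟨⟨le_rfl, by simp⟩, fun _ => Conn.refl (by left; simp), fun h => ?_⟩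
    simp at h
  | @tail b c h1 h2 ih =>
    obtain ⟨i1, i2, i3⟩ := ih h1
    obtain ⟨hs1, hs2⟩ := h2.slab
    refine ⟨hs2, ?_⟩
    obtain ⟨u, v, z⟩ := b
    obtain ⟨u', v', z'⟩ := c
    simp only [InSlab] at hs1 hs2 i2 i3 ⊢
    rcases horiz_cases h2 with ⟨rfl, rfl, hz⟩ | ⟨rfl, d, hu, hv, he, d', hu', hv', he'⟩
    · refine ⟨i2, fun h y hy => ?_⟩
      obtain ⟨e, y', h3, h4, h5⟩ := i3 h ⟨z.toNat, by omega⟩ (by simp; omega)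
      refine ⟨e, y', h3, h4, h5.tail ?_⟩
      unfold VA
      rcases hz with ⟨hz1, hz2⟩ | ⟨hz1, hz2⟩
      · left
        refine ⟨by simp; omega, ?_⟩
        have : ((z.toNat : ℕ) : ℤ) = z := by omega
        simpa [emap, emap0, this] using hz2
      · right
        refine ⟨by simp; omega, ?_⟩
        simpa [emap, emap0, hy] using hz2
    · have hpar := dx_dy_parity d
      constructor
      · intro hev
        have hodd : (u + v) % 2 = 1 := by omega
        obtain ⟨e, y', h3, h4, h5⟩ := i3 hodd ⟨z'.toNat, by omega⟩ (by simp; omega)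
        have hzz : ((z'.toNat : ℕ) : ℤ) = z' := by omega
        by_cases hed : e = d
        · subst hed; rw [hu, hv]; exact h3
        · have hrel : Rel (fun l => ω (emap k (⟨(u, v), hodd⟩, l))) e d :=
            ⟨y', _, h4, h5, by simpa [emap, hzz] using he⟩
          obtain ⟨h6, h7⟩ := H _ _ _ hrel hed
          rw [hu, hv]
          exact h3.trans (fine_step A ⟨(u, v), hodd⟩ e d h6 h7)
      · intro hodd y hy
        have hev : (u + v) % 2 = 0 := by omega
        refine ⟨d', y, ?_, ?_, .refl⟩
        · rw [← hu', ← hv']; exact i2 hev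
        · simpa [emap, hy] using he'

theorem det_lemma (k : ℕ) (ω : Config) (A : ℤ × ℤ → Bool)
    (H : ∀ x d d', Rel (fun l => ω (emap k (x, l))) d d' → d ≠ d' → A (fc (x, d)) = true ∧ A (fc (x, d')) = true)
    (hinf : (cluster k ω 0).Infinite) : A ∈ InfE := by
  intro hfin
  apply hinf
  obtain ⟨N, hN⟩ : ∃ N : ℤ, ∀ c ∈ {c | Conn (Op A) (0, 0) c}, -N ≤ c.1 ∧ c.1 ≤ N ∧ -N ≤ c.2 ∧ c.2 ≤ N := by
    refine ⟨((hfin.toFinset.sup (fun d => d.1.natAbs + d.2.natAbs) : ℕ) : ℤ), fun d hd => ?_⟩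
    have := Finset.le_sup (f := fun d : ℤ × ℤ => d.1.natAbs + d.2.natAbs) (hfin.mem_toFinset.2 hd)
    omega
  refine Set.Finite.subset (Finset.finite_toSet (Finset.Icc (-N - 2) (N + 2) ×ˢ Finset.Icc (-N - 2) (N + 2) ×ˢ Finset.Icc (0:ℤ) k)) ?_
  intro w hw
  obtain ⟨h1, h2, h3⟩ := path_inv k ω A H w hw
  obtain ⟨u, v, z⟩ := w
  simp only [InSlab] at h1 h2 h3
  simp only [Finset.coe_product, Finset.coe_Icc, mem_prod, mem_Icc]
  rcases Int.emod_two_eq (u + v) with hp | hp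
  · have := hN _ (h2 hp)
    simp only at this
    omega
  · obtain ⟨d, z', h4, -⟩ := h3 hp ⟨z.toNat, by omega⟩ (by simp; omega)
    have := hN _ h4
    simp only at this
    have h5 : -1 ≤ dx d ∧ dx d ≤ 1 ∧ -1 ≤ dy d ∧ dy d ≤ 1 := by fin_cases d <;> simp [dx, dy]
    omega




/-- law of a star -/
noncomputable def muStar (k : ℕ) (p q : ℝ) : Measure (Lab k → Bool) :=
  Measure.infinitePi (fun l => bern (if l.1 = none then q else p))

/-- directions that are open in at least one layer -/
noncomputable def Xs {k : ℕ} (η : Lab k → Bool) (d : Fin 4) : Bool := decide (∃ z, η (some d, z) = true)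

theorem bern_true (p : ℝ) : bern p {true} = ENNReal.ofReal p := by simp [bern]
theorem bern_false (p : ℝ) : bern p {false} = ENNReal.ofReal (1 - p) := by simp [bern]

theorem or_law (n : ℕ) (p : ℝ) (h0 : 0 ≤ p) (h1 : p ≤ 1) :
    (Measure.infinitePi (fun _ : Fin n => bern p)).map (fun b => decide (∃ z, b z = true)) =
      bern (1 - (1 - p) ^ n) := by
  have := bern_prob h0 h1
  have hp0 : 0 ≤ (1 - p) ^ n := pow_nonneg (by linarith) n
  have hp1 : (1 - p) ^ n ≤ 1 := pow_le_one₀ (by linarith) (by linarith)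
  have := bern_prob (p := 1 - (1 - p) ^ n) (by linarith) (by linarith)
  have hm : Measurable (fun b : Fin n → Bool => decide (∃ z, b z = true)) := measurable_of_finite _
  have hpm : IsProbabilityMeasure ((Measure.infinitePi (fun _ : Fin n => bern p)).map (fun b => decide (∃ z, b z = true))) :=
    Measure.isProbabilityMeasure_map hm.aemeasurable
  have key : (Measure.infinitePi (fun _ : Fin n => bern p)).map (fun b => decide (∃ z, b z = true)) {false} =
      bern (1 - (1 - p) ^ n) {false} := by
    rw [Measure.map_apply hm (by simp)]
    have e : (fun b : Fin n → Bool => decide (∃ z, b z = true)) ⁻¹' {false} = {fun _ => false} := by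
      ext b; simp [funext_iff]
    rw [e, Measure.infinitePi_singleton_of_fintype, bern_false]
    simp only [bern_false]
    rw [Finset.prod_const, ← ENNReal.ofReal_pow (by linarith)]
    simp
  refine Measure.ext_of_singleton fun b => ?_
  cases b
  · exact key
  · have e : ({true} : Set Bool) = {false}ᶜ := by ext b; cases b <;> simp
    rw [e, prob_compl_eq_one_sub (by simp), prob_compl_eq_one_sub (by simp), key]

theorem Xs_law (k : ℕ) (p q : ℝ) (h0 : 0 ≤ p) (h1 : p ≤ 1) (hq0 : 0 ≤ q) (hq1 : q ≤ 1) :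
    (muStar k p q).map Xs = Measure.infinitePi (fun _ : Fin 4 => bern (1 - (1 - p) ^ (k + 1))) := by
  have hb : ∀ l : Lab k, IsProbabilityMeasure (bern (if l.1 = none then q else p)) := by
    intro l; split_ifs
    · exact bern_prob hq0 hq1
    · exact bern_prob h0 h1
  have := bern_prob h0 h1
  have e1 := Measure.map_infinitePi_infinitePi_of_inj (P := fun l : Lab k => bern (if l.1 = none then q else p))
    (f := fun i : Fin 4 × Fin (k + 1) => ((some i.1, i.2) : Lab k)) (by
      rintro ⟨a, b⟩ ⟨c, d⟩ h; simpa using h)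
  have e2 := Measure.infinitePi_map_curry (fun (_ : Fin 4) (_ : Fin (k + 1)) => bern p)
  have e3 := Measure.infinitePi_map_pi (fun (_ : Fin 4) => Measure.infinitePi (fun _ : Fin (k + 1) => bern p))
    (f := fun _ b => decide (∃ z, b z = true)) (fun i => measurable_of_finite _)
  rw [or_law _ _ h0 h1] at e3
  rw [← e3, ← e2]
  simp only [reduceCtorEq, if_false] at e1
  rw [← e1, Measure.map_map (MeasurableEquiv.measurable _) (by fun_prop), Measure.map_map (measurable_of_finite _) (measurable_of_finite _)]
  rfl

/-- special star configurations -/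
def sp {k : ℕ} (B : Fin 4 → Bool) (a : Fin 4) : Lab k → Bool
  | (none, _) => false
  | (some d, z) => B d && (if d = a then decide ((z : ℕ) = 0) else decide ((z : ℕ) = 1))

theorem Xs_sp {k : ℕ} (hk : 1 ≤ k) (B : Fin 4 → Bool) (a : Fin 4) : Xs (sp (k := k) B a) = B := by
  funext d
  rw [Bool.eq_iff_iff]
  simp only [Xs, sp, decide_eq_true_eq, Bool.and_eq_true]
  constructor
  · rintro ⟨z, h, -⟩; exact h
  · intro h
    by_cases hd : d = a
    · exact ⟨0, h, by simp [hd]⟩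
    · exact ⟨⟨1, by omega⟩, h, by simp [hd]⟩

theorem sp_rel {k : ℕ} (B : Fin 4 → Bool) (a d d' : Fin 4) (h : Rel (sp (k := k) B a) d d') (hd : d ≠ d') :
    Function.update B a false d = true ∧ Function.update B a false d' = true := by
  obtain ⟨z, z', h1, h2, h3⟩ := h
  have hz : z = z' := by
    clear h1 h3
    induction h2 with
    | refl => rfl
    | tail _ h ih => simp [VA, sp] at h
  subst hz
  simp only [sp, Bool.and_eq_true] at h1 h3
  by_cases hda : d = a
  · subst hda
    rw [if_pos rfl] at h1
    rw [if_neg (Ne.symm hd)] at h3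
    simp only [decide_eq_true_eq] at h1 h3; omega
  · by_cases hda' : d' = a
    · subst hda'
      rw [if_pos rfl] at h3
      rw [if_neg hd] at h1
      simp only [decide_eq_true_eq] at h1 h3; omega
    · simp [Function.update, hda, hda', h1.1, h3.1]

theorem Rel_Xs {k : ℕ} (η : Lab k → Bool) (d d' : Fin 4) (h : Rel η d d') : Xs η d = true ∧ Xs η d' = true := by
  obtain ⟨z, z', h1, -, h3⟩ := h
  simp only [Xs, decide_eq_true_eq]
  exact ⟨⟨z, h1⟩, ⟨z', h3⟩⟩

noncomputable def Gf (P : ℝ) (B : Fin 4 → Bool) (a : Fin 4) : ℝ :=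
  (P - 1 / 2) * ∏ d, (if d < a then 1 / 2 else if d = a then 1 else if B d then P else 1 - P)

/-- flow amounts with support -/
noncomputable def Ff (P : ℝ) (B : Fin 4 → Bool) (a : Fin 4) : ℝ := if B a then Gf P B a else 0

theorem Gf_bounds (P : ℝ) (h : 1 / 2 ≤ P) (h1 : P ≤ 1) (B : Fin 4 → Bool) (a : Fin 4) :
    0 ≤ Gf P B a ∧ Gf P B a ≤ P - 1 / 2 := by
  have h0 : 0 ≤ P - 1 / 2 := by linarith
  have hf : ∀ d : Fin 4, 0 ≤ (if d < a then 1 / 2 else if d = a then 1 else if B d then P else 1 - P) ∧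
      (if d < a then 1 / 2 else if d = a then 1 else if B d then P else 1 - P) ≤ 1 := by
    intro d; split_ifs <;> constructor <;> linarith
  constructor
  · exact mul_nonneg h0 (Finset.prod_nonneg fun d _ => (hf d).1)
  · exact mul_le_of_le_one_right h0 (Finset.prod_le_one (fun d _ => (hf d).1) fun d _ => (hf d).2)

theorem Ff_bounds (P : ℝ) (h : 1 / 2 ≤ P) (h1 : P ≤ 1) (B : Fin 4 → Bool) (a : Fin 4) :
    0 ≤ Ff P B a ∧ Ff P B a ≤ P - 1 / 2 := by
  unfold Ff; split_ifs
  · exact Gf_bounds P h h1 B a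
  · exact ⟨le_rfl, by linarith⟩

theorem flow_identity (P : ℝ) (A : Fin 4 → Bool) :
    (∏ d, (if A d then P else 1 - P)) + ∑ a, ∑ B, (if Function.update B a false = A then Ff P B a else 0) =
      1 / 16 + ∑ a, ∑ B, (if B = A then Ff P B a else 0) := by
  have e1 : ∀ a, ∑ B, (if Function.update B a false = A then Ff P B a else 0) =
      if A a then 0 else Gf P A a := by
    intro a
    rw [Finset.sum_eq_single (Function.update A a true)]
    · have hG : Gf P (Function.update A a true) a = Gf P A a := by
        unfold Gf
        congr 1
        refine Finset.prod_congr rfl fun d _ => ?_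
        by_cases hd : d = a
        · simp [hd]
        · simp [Function.update, hd]
      cases hA : A a
      · have : Function.update A a false = A := by rw [← hA]; simp
        simp [this, Ff, hG]
      · have : Function.update A a false ≠ A := by
          intro h; have := congrFun h a; simp [hA] at this
        simp [this]
    · intro B _ hB
      split_ifs with h
      · unfold Ff
        split_ifs with h'
        · exfalso; apply hB; rw [← h]; simp; rw [← h']
        · rfl
      · rfl
    · simp
  simp only [e1, Finset.sum_ite_eq', Finset.mem_univ, if_true]
  unfold Ff Gf
  simp only [Fin.sum_univ_four, Fin.prod_univ_four]
  cases A 0 <;> cases A 1 <;> cases A 2 <;> cases A 3 <;> simp <;> ring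




theorem flow_ennreal (P : ℝ) (h : 1 / 2 ≤ P) (h1 : P ≤ 1) (A : Fin 4 → Bool) :
    (Measure.infinitePi (fun _ : Fin 4 => bern P)) {A} +
      ∑ a, ∑ B, (if Function.update B a false = A then ENNReal.ofReal (Ff P B a) else 0) =
      fair (Fin 4) {A} + ∑ a, ∑ B, (if B = A then ENNReal.ofReal (Ff P B a) else 0) := by
  have := bern_prob (p := P) (by linarith) h1
  have hc : IsProbabilityMeasure coin := bern_prob (by norm_num) (by norm_num)
  have e1 : (Measure.infinitePi (fun _ : Fin 4 => bern P)) {A} =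
      ENNReal.ofReal (∏ d, (if A d then P else 1 - P)) := by
    rw [Measure.infinitePi_singleton_of_fintype, ENNReal.ofReal_prod_of_nonneg]
    · refine Finset.prod_congr rfl fun d _ => ?_
      cases A d
      · simp [bern_false]
      · simp [bern_true]
    · intro d _; split_ifs <;> linarith
  have e2 : fair (Fin 4) {A} = ENNReal.ofReal (1 / 16) := by
    unfold fair
    rw [Measure.infinitePi_singleton_of_fintype]
    simp only [coin_singleton, Finset.prod_const, Finset.card_univ, Fintype.card_fin]
    rw [show (2 : ℝ≥0∞)⁻¹ = ENNReal.ofReal (1 / 2) by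
      rw [one_div, ENNReal.ofReal_inv_of_pos (by norm_num)]; simp, ← ENNReal.ofReal_pow (by norm_num)]
    norm_num
  have hF := fun B a => (Ff_bounds P h h1 B a).1
  have g : ∀ c : (Fin 4 → Bool) → Fin 4 → Prop, ∀ [∀ B a, Decidable (c B a)],
      ∑ a, ∑ B, (if c B a then ENNReal.ofReal (Ff P B a) else 0) =
      ENNReal.ofReal (∑ a, ∑ B, (if c B a then Ff P B a else 0)) ∧
      0 ≤ ∑ a, ∑ B, (if c B a then Ff P B a else 0) := by
    intro c _
    have hn : ∀ a B, 0 ≤ (if c B a then Ff P B a else 0) := by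
      intro a B; split_ifs
      · exact hF B a
      · exact le_rfl
    refine ⟨?_, Finset.sum_nonneg fun a _ => Finset.sum_nonneg fun B _ => hn a B⟩
    rw [ENNReal.ofReal_sum_of_nonneg fun a _ => Finset.sum_nonneg fun B _ => hn a B]
    refine Finset.sum_congr rfl fun a _ => ?_
    rw [ENNReal.ofReal_sum_of_nonneg fun B _ => hn a B]
    refine Finset.sum_congr rfl fun B _ => ?_
    split_ifs <;> simp
  have g1 := g (fun B a => Function.update B a false = A)
  have g2 := g (fun B a => B = A)
  rw [e1, e2, g1.1, g2.1, ← ENNReal.ofReal_add _ g1.2, ← ENNReal.ofReal_add (by norm_num) g2.2, flow_identity]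
  exact Finset.prod_nonneg fun d _ => by split_ifs <;> linarith

theorem star_coupling (k : ℕ) (p q : ℝ) (h0 : 0 ≤ p) (h1 : p ≤ 1) (hq0 : 0 ≤ q) (hq1 : q ≤ 1)
    (hP : 1 / 2 ≤ 1 - (1 - p) ^ (k + 1)) (hk : 1 ≤ k ∨ 1 - (1 - p) ^ (k + 1) = 1 / 2)
    (hε : ∀ B a, 64 * ENNReal.ofReal (1 - (1 - p) ^ (k + 1) - 1 / 2) ≤ muStar k p q {sp B a}) :
    ∃ κ : Measure ((Lab k → Bool) × (Fin 4 → Bool)), IsProbabilityMeasure κ ∧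
      κ.map Prod.fst = muStar k p q ∧ κ.map Prod.snd = fair (Fin 4) ∧
      ∀ᵐ x ∂κ, ∀ d d', Rel x.1 d d' → d ≠ d' → x.2 d = true ∧ x.2 d' = true := by
  classical
  have hX := Xs_law k p q h0 h1 hq0 hq1
  set P := 1 - (1 - p) ^ (k + 1) with hPd
  have hP1 : P ≤ 1 := by
    have : 0 ≤ (1 - p) ^ (k + 1) := pow_nonneg (by linarith) _
    linarith
  have hb : ∀ l : Lab k, IsProbabilityMeasure (bern (if l.1 = none then q else p)) := by
    intro l; split_ifs
    · exact bern_prob hq0 hq1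
    · exact bern_prob h0 h1
  have hmu : IsProbabilityMeasure (muStar k p q) := by unfold muStar; infer_instance
  set μ := muStar k p q
  set w : Fin 4 → (Fin 4 → Bool) → ℝ≥0∞ := fun a B => ENNReal.ofReal (Ff P B a) with hw
  set t : (Lab k → Bool) → ℝ≥0∞ := fun η => ∑ a, ∑ B, if sp B a = η then w a B else 0 with ht
  have hwle : ∀ a B, w a B ≤ ENNReal.ofReal (P - 1 / 2) := fun a B =>
    ENNReal.ofReal_le_ofReal (Ff_bounds P hP hP1 B a).2
  have htle : ∀ η, t η ≤ μ {η} := by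
    intro η
    by_cases hη : ∃ B a, sp B a = η
    · obtain ⟨B, a, rfl⟩ := hη
      refine le_trans ?_ (hε B a)
      calc t (sp B a) ≤ ∑ a : Fin 4, ∑ B : Fin 4 → Bool, ENNReal.ofReal (P - 1 / 2) := by
            refine Finset.sum_le_sum fun a _ => Finset.sum_le_sum fun B _ => ?_
            split_ifs
            · exact hwle a B
            · exact zero_le
        _ = 64 * ENNReal.ofReal (P - 1 / 2) := by
            simp only [Finset.sum_const, Finset.card_univ, Fintype.card_fin, Fintype.card_pi, Fintype.card_bool, Finset.prod_const, nsmul_eq_mul]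
            rw [← mul_assoc]; norm_num
    · push Not at hη
      have : t η = 0 := by simp [ht, hη]
      rw [this]; exact zero_le
  set κ : Measure ((Lab k → Bool) × (Fin 4 → Bool)) :=
    ∑ η, (μ {η} - t η) • Measure.dirac (η, Xs η) +
      ∑ a, ∑ B, w a B • Measure.dirac (sp B a, Function.update B a false) with hκ
  have hms : ∀ S : Set ((Lab k → Bool) × (Fin 4 → Bool)), MeasurableSet S := fun S => S.toFinite.measurableSet
  have hκS : ∀ S : Set ((Lab k → Bool) × (Fin 4 → Bool)), κ S =
      ∑ η, (if (η, Xs η) ∈ S then μ {η} - t η else 0) +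
      ∑ a, ∑ B, (if (sp B a, Function.update B a false) ∈ S then w a B else 0) := by
    intro S
    simp [hκ, Measure.dirac_apply' _ (hms S), Set.indicator_apply]
  have hfst : κ.map Prod.fst = μ := by
    refine Measure.ext_of_singleton fun η => ?_
    rw [Measure.map_apply measurable_fst (by simp), hκS]
    simp only [mem_preimage, mem_singleton_iff, Finset.sum_ite_eq', Finset.mem_univ, if_true]
    exact tsub_add_cancel_of_le (htle η)
  have hsnd : κ.map Prod.snd = fair (Fin 4) := by
    refine Measure.ext_of_singleton fun A => ?_
    rw [Measure.map_apply measurable_snd (by simp), hκS]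
    simp only [mem_preimage, mem_singleton_iff]
    have hfl := flow_ennreal P hP hP1 A
    rw [← hX, Measure.map_apply (measurable_of_finite _) (by simp)] at hfl
    have e1 : μ (Xs ⁻¹' {A}) = ∑ η, (if Xs η = A then μ {η} else 0) := by
      rw [← Finset.sum_filter, sum_measure_singleton]
      congr 1; ext η; simp
    have e2 : ∑ η, (if Xs η = A then t η else 0) = ∑ a, ∑ B, (if B = A then w a B else 0) := by
      have : ∀ η, (if Xs η = A then t η else 0) =
          ∑ a, ∑ B, if sp B a = η then (if Xs η = A then w a B else 0) else 0 := by
        intro η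
        by_cases hh : Xs η = A
        · simp [hh, ht]
        · simp [hh]
      simp only [this]
      rw [Finset.sum_comm]
      refine Finset.sum_congr rfl fun a _ => ?_
      rw [Finset.sum_comm]
      refine Finset.sum_congr rfl fun B _ => ?_
      rw [Finset.sum_ite_eq]
      simp only [Finset.mem_univ, if_true]
      rcases hk with hk | hk
      · rw [Xs_sp hk]
      · have : w a B = 0 := by
          have := hwle a B
          rw [hk] at this; simpa using this
        simp [this]
    have e3 : ∑ η, (if Xs η = A then μ {η} - t η else 0) + ∑ η, (if Xs η = A then t η else 0) =
        ∑ η, (if Xs η = A then μ {η} else 0) := by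
      rw [← Finset.sum_add_distrib]
      refine Finset.sum_congr rfl fun η _ => ?_
      split_ifs
      · exact tsub_add_cancel_of_le (htle η)
      · simp
    have hT : ∑ a, ∑ B, (if B = A then w a B else 0) ≠ ∞ := by
      refine ENNReal.sum_ne_top.2 fun a _ => ENNReal.sum_ne_top.2 fun B _ => ?_
      split_ifs
      · exact ENNReal.ofReal_ne_top
      · simp
    rw [e1, ← e3, e2] at hfl
    rw [← ENNReal.add_left_inj hT]
    rw [← hfl]; ring
  refine ⟨κ, ?_, hfst, hsnd, ?_⟩
  · constructor
    have := congrArg (fun m => m univ) hfst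
    simp only [Measure.map_apply measurable_fst MeasurableSet.univ, preimage_univ, measure_univ] at this
    exact this
  · rw [ae_iff, hκS]
    have z1 : ∀ η, (η, Xs η) ∉ {x : (Lab k → Bool) × (Fin 4 → Bool) | ¬ ∀ d d', Rel x.1 d d' → d ≠ d' → x.2 d = true ∧ x.2 d' = true} := by
      intro η hη
      exact hη fun d d' h _ => Rel_Xs η d d' h
    have z2 : ∀ a B, (sp B a, Function.update B a false) ∉ {x : (Lab k → Bool) × (Fin 4 → Bool) | ¬ ∀ d d', Rel x.1 d d' → d ≠ d' → x.2 d = true ∧ x.2 d' = true} := by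
      intro a B hη
      exact hη fun d d' h hd => sp_rel B a d d' h hd
    simp only [z1, z2, if_false, Finset.sum_const_zero, add_zero]




/-! ### Measurability -/

/-- reachability in `n` steps -/
def reachN {V : Type} (R : V → V → Prop) (x : V) : ℕ → V → Prop
  | 0, y => x = y
  | n + 1, y => ∃ z, reachN R x n z ∧ R z y

theorem reach_iff {V : Type} (R : V → V → Prop) (x y : V) :
    Relation.ReflTransGen R x y ↔ ∃ n, reachN R x n y := by
  constructor
  · intro h
    induction h with
    | refl => exact ⟨0, rfl⟩
    | tail _ h ih => obtain ⟨n, hn⟩ := ih; exact ⟨n + 1, _, hn, h⟩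
  · rintro ⟨n, hn⟩
    induction n generalizing y with
    | zero => rw [show x = y from hn]
    | succ n ih => obtain ⟨z, hz, h⟩ := hn; exact (ih z hz).tail h

theorem meas_inf {Ω V : Type} [MeasurableSpace Ω] [Countable V] (R : Ω → V → V → Prop)
    (hR : ∀ x y, MeasurableSet {ω | R ω x y}) (x : V) :
    MeasurableSet {ω | {y | Relation.ReflTransGen (R ω) x y}.Infinite} := by
  have h1 : ∀ n y, MeasurableSet {ω | reachN (R ω) x n y} := by
    intro n
    induction n with
    | zero => intro y; exact MeasurableSet.const _
    | succ n ih =>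
      intro y
      have : {ω | reachN (R ω) x (n + 1) y} = ⋃ z, ({ω | reachN (R ω) x n z} ∩ {ω | R ω z y}) := by
        ext ω; simp [reachN]
      rw [this]
      exact MeasurableSet.iUnion fun z => (ih z).inter (hR z y)
  have h2 : ∀ y, MeasurableSet {ω | Relation.ReflTransGen (R ω) x y} := by
    intro y
    have : {ω | Relation.ReflTransGen (R ω) x y} = ⋃ n, {ω | reachN (R ω) x n y} := by
      ext ω; simp [reach_iff]
    rw [this]
    exact MeasurableSet.iUnion fun n => h1 n y
  have : {ω | {y | Relation.ReflTransGen (R ω) x y}.Infinite} =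
      ⋂ F : Finset V, ⋃ y : V, ({ω | Relation.ReflTransGen (R ω) x y} ∩ {_ω | y ∉ F}) := by
    ext ω
    simp only [mem_iInter, mem_iUnion, mem_inter_iff, Set.mem_ofPred_eq]
    constructor
    · intro h F
      obtain ⟨y, hy, hF⟩ := h.exists_notMem_finset F
      exact ⟨y, hy, hF⟩
    · intro h hfin
      obtain ⟨y, hy, hF⟩ := h hfin.toFinset
      exact hF (hfin.mem_toFinset.2 hy)
  rw [this]
  exact MeasurableSet.iInter fun F => MeasurableSet.iUnion fun y => (h2 y).inter (MeasurableSet.const _)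

theorem meas_true {ι : Type} (i : ι) : MeasurableSet {ω : ι → Bool | ω i = true} :=
  measurableSet_eq_fun (measurable_pi_apply i) measurable_const

theorem meas_cluster (k : ℕ) : MeasurableSet {ω : Config | (cluster k ω 0).Infinite} := by
  refine meas_inf (fun ω => OpenAdj k ω) (fun x y => ?_) 0
  have : {ω | OpenAdj k ω x y} = ⋃ i : Fin 3,
      (({_ω | y = x + dvec i ∧ IsEdge k (x, i)} ∩ {ω : Config | ω (x, i) = true}) ∪
      ({_ω | x = y + dvec i ∧ IsEdge k (y, i)} ∩ {ω : Config | ω (y, i) = true})) := by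
    ext ω; simp [OpenAdj, and_assoc]
  rw [this]
  exact MeasurableSet.iUnion fun i => ((MeasurableSet.const _).inter (meas_true _)).union
    ((MeasurableSet.const _).inter (meas_true _))

theorem meas_InfE : MeasurableSet InfE := by
  have : InfE = {ω | {y | Relation.ReflTransGen (fun x y => Adj4 x y ∧ y ∈ Op ω) (0, 0) y}.Infinite} := by
    ext ω
    have h0 : ((0, 0) : ℤ × ℤ) ∈ Op ω := by left; simp
    simp [InfE, Conn, h0]
  rw [this]
  refine meas_inf (fun ω x y => Adj4 x y ∧ y ∈ Op ω) (fun x y => ?_) (0, 0)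
  have : {ω | Adj4 x y ∧ y ∈ Op ω} = {_ω | Adj4 x y} ∩ ({_ω | y.1 % 2 = 0 ∧ y.2 % 2 = 0} ∪
      ({_ω | y.1 % 2 ≠ y.2 % 2} ∩ {ω : ℤ × ℤ → Bool | ω y = true})) := by
    ext ω; simp [mem_Op]
  rw [this]
  exact (MeasurableSet.const _).inter ((MeasurableSet.const _).union ((MeasurableSet.const _).inter (meas_true _)))

theorem meas_extend {α β : Type} {f : α → β} (hf : Function.Injective f) (b : Bool) :
    Measurable (fun ξ : α → Bool => Function.extend f ξ (fun _ => b)) := by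
  rw [measurable_pi_iff]
  intro c
  by_cases h : ∃ a, f a = c
  · obtain ⟨a, rfl⟩ := h
    simp only [hf.extend_apply]
    exact measurable_pi_apply a
  · simp only [Function.extend_apply' _ _ _ h]
    exact measurable_const

/-- fine configuration from its star representation -/
theorem fair_null2 : fair (Jt × Fin 4) {A | Function.extend fc A (fun _ => false) ∈ InfE} = 0 := by
  have hmp := fair_comp fc_inj
  have hm : MeasurableSet {A : Jt × Fin 4 → Bool | Function.extend fc A (fun _ => false) ∈ InfE} :=
    (meas_extend fc_inj false) meas_InfE
  rw [← hmp.measure_preimage hm.nullMeasurableSet]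
  convert fair_null using 2
  ext ω
  have : Op (Function.extend fc (fun j => ω (fc j)) (fun _ => false)) = Op ω := by
    ext c
    rw [mem_Op, mem_Op]
    by_cases hc : c.1 % 2 = c.2 % 2
    · simp [hc]
    · obtain ⟨i, rfl⟩ := fc_range c hc
      rw [fc_inj.extend_apply]
  simp only [mem_preimage, Set.mem_ofPred_eq, InfE, this]

theorem cluster_mono {k : ℕ} {ω ω' : Config} (h : ∀ e, ω e = true → ω' e = true) (x : Vtx) :
    cluster k ω x ⊆ cluster k ω' x := by
  intro y hy
  refine Relation.ReflTransGen.mono (p := OpenAdj k ω') ?_ x y hy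
  rintro a b ⟨i, h1 | h1⟩
  · exact ⟨i, Or.inl ⟨h1.1, h1.2.1, h _ h1.2.2⟩⟩
  · exact ⟨i, Or.inr ⟨h1.1, h1.2.1, h _ h1.2.2⟩⟩

theorem theta_zero (k : ℕ) (p q : ℝ) (h0 : 0 ≤ p) (h1 : p ≤ 1) (hq0 : 0 ≤ q) (hq1 : q ≤ 1)
    (hP : 1 / 2 ≤ 1 - (1 - p) ^ (k + 1)) (hk : 1 ≤ k ∨ 1 - (1 - p) ^ (k + 1) = 1 / 2)
    (hε : ∀ B a, 64 * ENNReal.ofReal (1 - (1 - p) ^ (k + 1) - 1 / 2) ≤ muStar k p q {sp B a}) :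
    theta k p q = 0 := by
  classical
  obtain ⟨κ, hκ, hκ1, hκ2, hae⟩ := star_coupling k p q h0 h1 hq0 hq1 hP hk hε
  have hb : ∀ l : Lab k, IsProbabilityMeasure (bern (if l.1 = none then q else p)) := by
    intro l; split_ifs
    · exact bern_prob hq0 hq1
    · exact bern_prob h0 h1
  have hbe : ∀ e : EdgeIdx, IsProbabilityMeasure (bern (if e.2 = 2 then q else p)) := by
    intro l; split_ifs
    · exact bern_prob hq0 hq1
    · exact bern_prob h0 h1
  set K : Measure (Jt → (Lab k → Bool) × (Fin 4 → Bool)) := Measure.infinitePi (fun _ => κ) with hK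
  -- law of the star part
  set L : Measure (Jt × Lab k → Bool) := Measure.infinitePi (fun i => bern (if i.2.1 = none then q else p)) with hL
  have hK1 : K.map (fun x (i : Jt × Lab k) => (x i.1).1 i.2) = L := by
    have e1 := Measure.infinitePi_map_pi (fun _ : Jt => κ) (f := fun _ => Prod.fst) (fun _ => measurable_fst)
    have e2 := Measure.infinitePi_map_curry_symm (fun (_ : Jt) (l : Lab k) => bern (if l.1 = none then q else p))
    rw [hκ1] at e1
    rw [hL, ← e2]
    change _ = Measure.map _ (Measure.infinitePi fun _ : Jt => muStar k p q)
    rw [← e1, Measure.map_map (MeasurableEquiv.measurable _) (by fun_prop)]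
    rfl
  have hK2 : K.map (fun x (i : Jt × Fin 4) => (x i.1).2 i.2) = fair (Jt × Fin 4) := by
    have e1 := Measure.infinitePi_map_pi (fun _ : Jt => κ) (f := fun _ => Prod.snd) (fun _ => measurable_snd)
    have hc : IsProbabilityMeasure coin := bern_prob (by norm_num) (by norm_num)
    have e2 := Measure.infinitePi_map_curry_symm (fun (_ : Jt) (l : Fin 4) => coin)
    rw [hκ2] at e1
    unfold fair
    rw [← e2]
    change _ = Measure.map _ (Measure.infinitePi fun _ : Jt => fair (Fin 4))
    rw [← e1, Measure.map_map (MeasurableEquiv.measurable _) (by fun_prop)]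
    rfl
  have hS : (slabMeasure k p q).map (fun ω i => ω (emap k i)) = L := by
    unfold slabMeasure
    rw [bernoulliProduct_eq _ (by intro e; split_ifs <;> assumption) (by intro e; split_ifs <;> assumption)]
    have := Measure.map_infinitePi_infinitePi_of_inj (P := fun e : EdgeIdx => bern (if e.2 = 2 then q else p)) (emap_inj k)
    rw [this, hL]
    congr 1
    funext i
    have : (emap k i).2 = 2 ↔ i.2.1 = none := by
      obtain ⟨x, o, z⟩ := i
      rcases o with _ | o
      · simp [emap, emap0]
      · fin_cases o <;> simp [emap, emap0]
    simp only [this]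
  set B1 : Set (Jt × Lab k → Bool) := {ξ | (cluster k (Function.extend (emap k) ξ (fun _ => true)) 0).Infinite} with hB1
  have hB1m : MeasurableSet B1 := (meas_extend (emap_inj k) true) (meas_cluster k)
  have hA : ∀ᵐ x ∂K, ∀ j d d', Rel (x j).1 d d' → d ≠ d' → (x j).2 d = true ∧ (x j).2 d' = true := by
    rw [ae_all_iff]
    intro j
    have := Measure.infinitePi_map_eval (fun _ : Jt => κ) j
    rw [← this] at hae
    exact ae_of_ae_map (measurable_pi_apply j).aemeasurable hae
  have hN : ∀ᵐ x ∂K, Function.extend fc (fun i : Jt × Fin 4 => (x i.1).2 i.2) (fun _ => false) ∉ InfE := by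
    have h2 : ∀ᵐ A ∂(fair (Jt × Fin 4)), Function.extend fc A (fun _ => false) ∉ InfE := by
      rw [ae_iff]; simpa using fair_null2
    rw [← hK2] at h2
    exact ae_of_ae_map (f := fun (x : Jt → (Lab k → Bool) × (Fin 4 → Bool)) (i : Jt × Fin 4) => (x i.1).2 i.2)
      (Measurable.aemeasurable (by fun_prop)) h2
  have hKB : L B1 = 0 := by
    rw [← hK1, Measure.map_apply (by fun_prop) hB1m]
    have : ∀ᵐ x ∂K, x ∉ (fun (x : Jt → (Lab k → Bool) × (Fin 4 → Bool)) (i : Jt × Lab k) => (x i.1).1 i.2) ⁻¹' B1 := by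
      filter_upwards [hA, hN] with x hx hn hB
      apply hn
      refine det_lemma k _ _ ?_ hB
      intro j d d' hr hd
      simp only [(emap_inj k).extend_apply] at hr
      simp only [fc_inj.extend_apply]
      exact hx j d d' hr hd
    exact measure_eq_zero_iff_ae_notMem.2 this
  rw [← hS, Measure.map_apply (by fun_prop) hB1m] at hKB
  refine measure_mono_null ?_ hKB
  intro ω hω
  refine Set.Infinite.mono (cluster_mono ?_ 0) hω
  intro e he
  by_cases h : ∃ a, emap k a = e
  · obtain ⟨a, rfl⟩ := h
    rw [(emap_inj k).extend_apply]; exact he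
  · rw [Function.extend_apply' _ _ _ h]




theorem pCrit_pow (k : ℕ) : (1 - pCrit k) ^ (k + 1) = 1 / 2 := by
  unfold pCrit
  rw [sub_sub_cancel, ← Real.rpow_natCast, ← Real.rpow_mul (by norm_num)]
  push_cast
  rw [one_div_mul_cancel (by positivity), Real.rpow_one]

theorem pCrit_pos (k : ℕ) : 0 < pCrit k := by
  unfold pCrit
  have : (1 / 2 : ℝ) ^ ((1 : ℝ) / (k + 1)) < 1 :=
    Real.rpow_lt_one (by norm_num) (by norm_num) (by positivity)
  linarith

theorem pCrit_le (k : ℕ) : pCrit k ≤ 1 / 2 := by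
  have h1 := pCrit_pow k
  have h2 := pCrit_pos k
  have h3 : 0 ≤ 1 - pCrit k := by
    unfold pCrit; rw [sub_sub_cancel]; positivity
  have h4 : (1 - pCrit k) ^ (k + 1) ≤ 1 - pCrit k := by
    rw [pow_succ]
    exact mul_le_of_le_one_left h3 (pow_le_one₀ h3 (by linarith))
  linarith

theorem qc_le (k : ℕ) (p : ℝ) : qc k p ≤ 1 := by
  unfold qc
  exact Real.sSup_le (fun q hq => hq.1.2) (by norm_num)

theorem le_qc {k : ℕ} {p q : ℝ} (h0 : 0 ≤ q) (h1 : q ≤ 1) (h : theta k p q = 0) : q ≤ qc k p := by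
  unfold qc
  exact le_csSup ⟨1, fun r hr => hr.1.2⟩ ⟨⟨h0, h1⟩, h⟩

theorem sp_lower (k : ℕ) (p q δ : ℝ) (hp : δ ≤ p) (hp1 : δ ≤ 1 - p) (hq : δ ≤ 1 - q)
    (h0 : 0 ≤ p) (h1 : p ≤ 1) (hq0 : 0 ≤ q) (hq1 : q ≤ 1) (B : Fin 4 → Bool) (a : Fin 4) :
    ENNReal.ofReal δ ^ (Fintype.card (Lab k)) ≤ muStar k p q {sp B a} := by
  have hb : ∀ l : Lab k, IsProbabilityMeasure (bern (if l.1 = none then q else p)) := by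
    intro l; split_ifs
    · exact bern_prob hq0 hq1
    · exact bern_prob h0 h1
  unfold muStar
  rw [Measure.infinitePi_singleton_of_fintype, ← Finset.card_univ, ← Finset.prod_const]
  refine Finset.prod_le_prod' fun l _ => ?_
  obtain ⟨o, z⟩ := l
  rcases o with _ | d
  · simp only [sp, if_true, bern_false]
    exact ENNReal.ofReal_le_ofReal hq
  · simp only [reduceCtorEq, if_false]
    cases sp B a (some d, z)
    · rw [bern_false]; exact ENNReal.ofReal_le_ofReal hp1
    · rw [bern_true]; exact ENNReal.ofReal_le_ofReal hp

/-- `q_c(p_k) = 1` and `q_c(p) → 1` as `p ↓ p_k`. -/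
theorem qc_at_pCrit (k : ℕ) :
    qc k (pCrit k) = 1 ∧
    Filter.Tendsto (qc k) (nhdsWithin (pCrit k) (Set.Ioc (pCrit k) (1 / 2))) (nhds 1) := by
  have hpos := pCrit_pos k
  have hle := pCrit_le k
  have hpow := pCrit_pow k
  constructor
  · refine le_antisymm (qc_le _ _) (le_qc (by norm_num) le_rfl ?_)
    refine theta_zero k _ 1 hpos.le (by linarith) (by norm_num) le_rfl (by rw [hpow]; norm_num)
      (Or.inr (by rw [hpow]; norm_num)) ?_
    intro B a
    rw [hpow]; norm_num
  · rcases Nat.eq_zero_or_pos k with rfl | hk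
    · have : pCrit 0 = 1 / 2 := by simp [pCrit]; norm_num
      rw [this]; simp
    · rw [tendsto_order]
      constructor
      · intro b hb
        set q := max 0 ((b + 1) / 2) with hq
        have hq0 : 0 ≤ q := le_max_left _ _
        have hq1 : q < 1 := max_lt (by norm_num) (by linarith)
        have hbq : b < q := lt_of_lt_of_le (by linarith) (le_max_right _ _)
        set δ := min (pCrit k) (1 - q) with hδ
        have hδ0 : 0 < δ := lt_min hpos (by linarith)
        have hδ1 : δ ≤ pCrit k := min_le_left _ _
        have hδ2 : δ ≤ 1 - q := min_le_right _ _
        have hcont : Continuous (fun p : ℝ => 64 * (1 - (1 - p) ^ (k + 1) - 1 / 2)) := by fun_prop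
        have hev : ∀ᶠ p in nhds (pCrit k), 64 * (1 - (1 - p) ^ (k + 1) - 1 / 2) < δ ^ (Fintype.card (Lab k)) := by
          refine hcont.continuousAt.eventually_lt continuousAt_const ?_
          simp only [hpow]
          have := pow_pos hδ0 (Fintype.card (Lab k))
          linarith
        filter_upwards [self_mem_nhdsWithin, mem_nhdsWithin_of_mem_nhds hev] with p hp hlt
        obtain ⟨hp1, hp2⟩ := hp
        have hP : (1 - p) ^ (k + 1) ≤ 1 / 2 := by
          rw [← hpow]
          exact pow_le_pow_left₀ (by linarith) (by linarith) _
        refine lt_of_lt_of_le hbq (le_qc hq0 hq1.le ?_)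
        refine theta_zero k p q (by linarith) (by linarith) hq0 hq1.le (by linarith) (Or.inl hk) ?_
        intro B a
        refine le_trans ?_ (sp_lower k p q δ (by linarith) (by linarith) hδ2 (by linarith) (by linarith) hq0 hq1.le B a)
        rw [← ENNReal.ofReal_pow hδ0.le, show (64 : ℝ≥0∞) = ENNReal.ofReal 64 by simp,
          ← ENNReal.ofReal_mul (by norm_num)]
        exact ENNReal.ofReal_le_ofReal hlt.le
      · intro b hb
        exact Filter.Eventually.of_forall fun p => lt_of_le_of_lt (qc_le k p) hb



end AnisoSlab
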